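/- Assume: if t₀ = min 𝕋 then f satisfies (H∞), (H^rd_loc-Lip) and (H^forw_regr); if t₀ = max 𝕋 then f satisfies (H∞), (H^ld_loc-Lip) and (H^back_stab); if t₀ ≠ inf 𝕋 and t₀ ≠ sup 𝕋 then f satisfies (H∞), (H^rd_loc-Lip), (H^forw_regr), (H^ld_loc-Lip) and (H^back_stab). Let (q,I_𝕋) be the maximal solution of (Δ-CP^σ). Then either I_𝕋 = 𝕋 (the maximal solution is global), or the maximal solution is not global and: (1) if t₀ = min 𝕋 then I_𝕋 = [t₀,b)_𝕋 where b ∈ (t₀,+∞)_𝕋 is a left-dense point of 𝕋; (2) if t₀ = max 𝕋 then I_𝕋 = (a,t₀]_𝕋 where a ∈ (−∞,t₀)_𝕋 is a right-dense point of 𝕋; (3) if t₀ ≠ inf 𝕋 and t₀ ≠ sup 𝕋 then I_𝕋 = (a,+∞)_𝕋 or I_𝕋 = (−∞,b)_𝕋 or I_𝕋 = (a,b)_𝕋, where a ∈ (−∞,t₀)_𝕋 is right-dense and b ∈ (t₀,+∞)_𝕋 is left-dense; and moreover, for every compact K ⊆ Ω there exists t ∈ I_𝕋 such that q(t) ∈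 Ω\K. -/

import Mathlib

/-!
A maximal solution that does not reach an end of `T` must be blocked there, and the only possible
obstruction is that it escapes from every compact subset of `Ω`.

Let `b` be the supremum of the interval of existence, and suppose that points of `T` to the right
of it (or `b` itself) are missing.

* If `b` belonged to the interval, the solution could be continued. When `b` is right-scattered,
  the equation at `b` reads `x' - μ(b) f(x', b) = q(b)` for the value `x'` at `σ(b)`, and the
  bijectivity of `G⁻(b)` provides `x'` (`SegSol.of_gap`). When `b` is right-dense, the local bound
  and the local Lipschitz condition make the integral operator a contraction on a short segment to
  the right of `b` (`SegSol.exists_local`). Hence `b` is missing, and it is left-dense because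
  it is a supremum that is not attained.
* If `q` stayed in a compact `K ⊆ Ω`, then `f` would be bounded along `q` near `b`, so `q` would be
  Lipschitz there, would have a limit in `K` at `b`, and this limit would continue the solution to
  `b` (`SegSol.exists_limit`).

The left end is symmetric; at a left-scattered point `a` the step to `ρ(a)` is the explicit formula
`q(ρ(a)) = G⁻(ρ(a))(q(a))`, which remains in `Ω` by backward stability.

Two technical points carry the argument. Continuations are built and glued as segment solutions
(`SegSol`), in which the equation is required as a difference equation at right-scattered points
and through Δ-derivatives at almost every right-dense point; `SegSol.isSolIccS` returns to the
original definition, up to continuity at the left endpoint. Lipschitz bounds come from a mean value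
inequality for absolutely continuous functions on a time scale (`DeltaAC.norm_sub_le`), and Δ-a.e.
statements and Δ-integrals are transferred to Lebesgue measure through the floor map `tsFloor`,
which sends `s` to the last point of `T` before it (`ae_delta_iff`, `ae_tsFloor`).
-/

open MeasureTheory Set Filter Classical

noncomputable section
open scoped Classical

/-- The forward jump operator `σ` of a time scale `T`. -/
def tsSigma (T : Set ℝ) (t : ℝ) : ℝ :=
  if ({s | s ∈ T ∧ t < s}).Nonempty then sInf {s | s ∈ T ∧ t < s} else t

/-- The backward jump operator `ρ` of a time scale `T`. -/
def tsRho (T : Set ℝ) (t : ℝ) : ℝ :=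
  if ({s | s ∈ T ∧ s < t}).Nonempty then sSup {s | s ∈ T ∧ s < t} else t

/-- The graininess function `μ(t) = σ(t) - t`. -/
def tsGrain (T : Set ℝ) (t : ℝ) : ℝ := tsSigma T t - t

/-- `t` is a right-scattered point of `T`. -/
def RightScattered (T : Set ℝ) (t : ℝ) : Prop := t < tsSigma T t

/-- `t` is a right-dense point of `T`. -/
def RightDense (T : Set ℝ) (t : ℝ) : Prop := tsSigma T t = t

/-- `t` is a left-scattered point of `T`. -/
def LeftScattered (T : Set ℝ) (t : ℝ) : Prop := tsRho T t < t

/-- `t` is a left-dense point of `T`. -/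
def LeftDense (T : Set ℝ) (t : ℝ) : Prop := tsRho T t = t

/-- `𝕋 \ {sup 𝕋}`: the time scale minus its maximum (if the maximum exists). -/
def tsUpDomain (T : Set ℝ) : Set ℝ := {t | t ∈ T ∧ ¬ IsGreatest T t}

/-- The Lebesgue Δ-measure on the time scale `T`: Lebesgue measure restricted to `T`
plus `Σ_{r ∈ ℛ} μ(r)·δ_r` over right-scattered points `r`. -/
def deltaMeasure (T : Set ℝ) : Measure ℝ :=
  volume.restrict T +
    Measure.sum (fun r : {t : ℝ // t ∈ T ∧ RightScattered T t} =>
      ENNReal.ofReal (tsGrain T r.1) • Measure.dirac r.1)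

/-- Δ-differentiability of `q` at `t`, with Δ-derivative `q'`. -/
def HasDeltaDerivAt {n : ℕ} (T : Set ℝ) (q : ℝ → EuclideanSpace ℝ (Fin n))
    (q' : EuclideanSpace ℝ (Fin n)) (t : ℝ) : Prop :=
  ∀ ε > (0:ℝ), ∃ U ∈ nhds t, ∀ s ∈ U ∩ T,
    ‖q (tsSigma T t) - q s - (tsSigma T t - s) • q'‖ ≤ ε * |tsSigma T t - s|

/-- Absolute continuity of `q` on `[a,b]_𝕋`. -/
def DeltaAC {n : ℕ} (T : Set ℝ) (a b : ℝ) (q : ℝ → EuclideanSpace ℝ (Fin n)) : Prop :=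
  ∀ ε > (0:ℝ), ∃ δ > (0:ℝ), ∀ (m : ℕ) (u v : ℕ → ℝ),
    (∀ k < m, u k ∈ Icc a b ∩ T) → (∀ k < m, v k ∈ Icc a b ∩ T) →
    (∀ k < m, u k ≤ v k) →
    (∀ i < m, ∀ j < m, i ≠ j → Disjoint (Icc (u i) (v i)) (Icc (u j) (v j))) →
    (∑ k ∈ Finset.range m, (v k - u k)) < δ →
    (∑ k ∈ Finset.range m, ‖q (v k) - q (u k)‖) < ε

/-- `f` is a Δ-Carathéodory function on `Ω × 𝕋\{sup 𝕋}`. -/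
def DeltaCaratheodory {n : ℕ} (T : Set ℝ) (Ω : Set (EuclideanSpace ℝ (Fin n)))
    (f : EuclideanSpace ℝ (Fin n) → ℝ → EuclideanSpace ℝ (Fin n)) : Prop :=
  (∀ x ∈ Ω, AEMeasurable (fun t => f x t) ((deltaMeasure T).restrict (tsUpDomain T))) ∧
    ∀ᵐ t ∂((deltaMeasure T).restrict (tsUpDomain T)), ContinuousOn (fun x => f x t) Ω

/-- Hypothesis (H∞): `f` is locally bounded. -/
def HInfty {n : ℕ} (T : Set ℝ) (Ω : Set (EuclideanSpace ℝ (Fin n)))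
    (f : EuclideanSpace ℝ (Fin n) → ℝ → EuclideanSpace ℝ (Fin n)) : Prop :=
  ∀ K : Set (EuclideanSpace ℝ (Fin n)), K ⊆ Ω → IsCompact K →
    ∀ a ∈ T, ∀ b ∈ T, a < b →
      ∃ M : ℝ, 0 ≤ M ∧
        ∀ᵐ t ∂((deltaMeasure T).restrict (Ico a b ∩ T)), ∀ x ∈ K, ‖f x t‖ ≤ M

/-- Hypothesis (H^rd_loc-Lip): local Lipschitz continuity at right-dense points. -/
def HrdLocLip {n : ℕ} (T : Set ℝ) (Ω : Set (EuclideanSpace ℝ (Fin n)))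
    (f : EuclideanSpace ℝ (Fin n) → ℝ → EuclideanSpace ℝ (Fin n)) : Prop :=
  ∀ xb ∈ Ω, ∀ tb ∈ T, ¬ IsGreatest T tb → RightDense T tb →
    ∃ R > (0:ℝ), ∃ δ > (0:ℝ), ∃ L : ℝ, 0 ≤ L ∧
      Metric.closedBall xb R ⊆ Ω ∧ tb + δ ∈ T ∧
      ∀ᵐ t ∂((deltaMeasure T).restrict (Ico tb (tb + δ) ∩ T)),
        ∀ x₁ ∈ Metric.closedBall xb R, ∀ x₂ ∈ Metric.closedBall xb R,
          ‖f x₁ t - f x₂ t‖ ≤ L * ‖x₁ - x₂‖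

/-- Hypothesis (H^ld_loc-Lip): local Lipschitz continuity at left-dense points. -/
def HldLocLip {n : ℕ} (T : Set ℝ) (Ω : Set (EuclideanSpace ℝ (Fin n)))
    (f : EuclideanSpace ℝ (Fin n) → ℝ → EuclideanSpace ℝ (Fin n)) : Prop :=
  ∀ xb ∈ Ω, ∀ tb ∈ T, ¬ IsLeast T tb → LeftDense T tb →
    ∃ R > (0:ℝ), ∃ δ > (0:ℝ), ∃ L : ℝ, 0 ≤ L ∧
      Metric.closedBall xb R ⊆ Ω ∧ tb - δ ∈ T ∧
      ∀ᵐ t ∂((deltaMeasure T).restrict (Ico (tb - δ) tb ∩ T)),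
        ∀ x₁ ∈ Metric.closedBall xb R, ∀ x₂ ∈ Metric.closedBall xb R,
          ‖f x₁ t - f x₂ t‖ ≤ L * ‖x₁ - x₂‖

/-- Hypothesis (H^forw_stab): `G⁺(t) : x ↦ x + μ(t) f(x,t)` maps `Ω` into `Ω`. -/
def HforwStab {n : ℕ} (T : Set ℝ) (Ω : Set (EuclideanSpace ℝ (Fin n)))
    (f : EuclideanSpace ℝ (Fin n) → ℝ → EuclideanSpace ℝ (Fin n)) : Prop :=
  ∀ t ∈ T, RightScattered T t → ∀ x ∈ Ω, x + tsGrain T t • f x t ∈ Ω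

/-- Hypothesis (H^back_regr): `G⁺(t)` is a bijection from `Ω` onto `ℝⁿ`. -/
def HbackRegr {n : ℕ} (T : Set ℝ) (Ω : Set (EuclideanSpace ℝ (Fin n)))
    (f : EuclideanSpace ℝ (Fin n) → ℝ → EuclideanSpace ℝ (Fin n)) : Prop :=
  ∀ t ∈ T, RightScattered T t → Set.BijOn (fun x => x + tsGrain T t • f x t) Ω univ

/-- Hypothesis (H^back_stab): `G⁻(t) : x ↦ x - μ(t) f(x,t)` maps `Ω` into `Ω`. -/
def HbackStab {n : ℕ} (T : Set ℝ) (Ω : Set (EuclideanSpace ℝ (Fin n)))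
    (f : EuclideanSpace ℝ (Fin n) → ℝ → EuclideanSpace ℝ (Fin n)) : Prop :=
  ∀ t ∈ T, RightScattered T t → ∀ x ∈ Ω, x - tsGrain T t • f x t ∈ Ω

/-- Hypothesis (H^forw_regr): `G⁻(t)` is a bijection from `Ω` onto `ℝⁿ`. -/
def HforwRegr {n : ℕ} (T : Set ℝ) (Ω : Set (EuclideanSpace ℝ (Fin n)))
    (f : EuclideanSpace ℝ (Fin n) → ℝ → EuclideanSpace ℝ (Fin n)) : Prop :=
  ∀ t ∈ T, RightScattered T t → Set.BijOn (fun x => x - tsGrain T t • f x t) Ω univ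

/-- Hypothesis (H^glob_Lip): global Lipschitz continuity. -/
def HglobLip {n : ℕ} (T : Set ℝ) (Ω : Set (EuclideanSpace ℝ (Fin n)))
    (f : EuclideanSpace ℝ (Fin n) → ℝ → EuclideanSpace ℝ (Fin n)) : Prop :=
  ∃ L : ℝ, 0 ≤ L ∧
    ∀ᵐ t ∂((deltaMeasure T).restrict (tsUpDomain T)),
      ∀ x₁ ∈ Ω, ∀ x₂ ∈ Ω, ‖f x₁ t - f x₂ t‖ ≤ L * ‖x₁ - x₂‖

/-- The relation `a ⊴ t₀ ⊴ b`. -/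
def Trile (T : Set ℝ) (t₀ a b : ℝ) : Prop :=
  (IsLeast T t₀ ∧ a = t₀ ∧ t₀ < b) ∨
  (IsGreatest T t₀ ∧ a < t₀ ∧ t₀ = b) ∨
  (¬ IsLeast T t₀ ∧ ¬ IsGreatest T t₀ ∧ a < t₀ ∧ t₀ < b)

/-- `(q, [a,b]_𝕋)` is a solution of the non shifted Δ-Cauchy problem (Δ-CP). -/
def IsSolIcc {n : ℕ} (T : Set ℝ) (Ω : Set (EuclideanSpace ℝ (Fin n)))
    (f : EuclideanSpace ℝ (Fin n) → ℝ → EuclideanSpace ℝ (Fin n))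
    (t₀ : ℝ) (q₀ : EuclideanSpace ℝ (Fin n))
    (q : ℝ → EuclideanSpace ℝ (Fin n)) (a b : ℝ) : Prop :=
  (∀ t ∈ Icc a b ∩ T, q t ∈ Ω) ∧ DeltaAC T a b q ∧ q t₀ = q₀ ∧
    ∀ᵐ t ∂((deltaMeasure T).restrict (Ico a b ∩ T)),
      HasDeltaDerivAt T q (f (q t) t) t

/-- `(q, [a,b]_𝕋)` is a solution of the shifted Δ-Cauchy problem (Δ-CP^σ). -/
def IsSolIccS {n : ℕ} (T : Set ℝ) (Ω : Set (EuclideanSpace ℝ (Fin n)))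
    (f : EuclideanSpace ℝ (Fin n) → ℝ → EuclideanSpace ℝ (Fin n))
    (t₀ : ℝ) (q₀ : EuclideanSpace ℝ (Fin n))
    (q : ℝ → EuclideanSpace ℝ (Fin n)) (a b : ℝ) : Prop :=
  (∀ t ∈ Icc a b ∩ T, q t ∈ Ω) ∧ DeltaAC T a b q ∧ q t₀ = q₀ ∧
    ∀ᵐ t ∂((deltaMeasure T).restrict (Ico a b ∩ T)),
      HasDeltaDerivAt T q (f (q (tsSigma T t)) t) t

/-- `I_𝕋 ∈ 𝕀`: `I` is a real interval containing points `a, b` of `T` with `a ⊴ t₀ ⊴ b`. -/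
def MemI (T : Set ℝ) (t₀ : ℝ) (I : Set ℝ) : Prop :=
  I.OrdConnected ∧ ∃ a ∈ I ∩ T, ∃ b ∈ I ∩ T, Trile T t₀ a b

/-- `(q, I_𝕋)` is a solution of (Δ-CP). -/
def IsSol {n : ℕ} (T : Set ℝ) (Ω : Set (EuclideanSpace ℝ (Fin n)))
    (f : EuclideanSpace ℝ (Fin n) → ℝ → EuclideanSpace ℝ (Fin n))
    (t₀ : ℝ) (q₀ : EuclideanSpace ℝ (Fin n))
    (q : ℝ → EuclideanSpace ℝ (Fin n)) (I : Set ℝ) : Prop :=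
  MemI T t₀ I ∧ (∀ t ∈ I ∩ T, q t ∈ Ω) ∧
    ∀ a ∈ I ∩ T, ∀ b ∈ I ∩ T, Trile T t₀ a b → IsSolIcc T Ω f t₀ q₀ q a b

/-- `(q, I_𝕋)` is a solution of (Δ-CP^σ). -/
def IsSolS {n : ℕ} (T : Set ℝ) (Ω : Set (EuclideanSpace ℝ (Fin n)))
    (f : EuclideanSpace ℝ (Fin n) → ℝ → EuclideanSpace ℝ (Fin n))
    (t₀ : ℝ) (q₀ : EuclideanSpace ℝ (Fin n))
    (q : ℝ → EuclideanSpace ℝ (Fin n)) (I : Set ℝ) : Prop :=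
  MemI T t₀ I ∧ (∀ t ∈ I ∩ T, q t ∈ Ω) ∧
    ∀ a ∈ I ∩ T, ∀ b ∈ I ∩ T, Trile T t₀ a b → IsSolIccS T Ω f t₀ q₀ q a b

/-- `(q₁, I₁_𝕋)` is an extension of `(q, I_𝕋)`. -/
def SolExtends {n : ℕ} (T : Set ℝ) (q₁ : ℝ → EuclideanSpace ℝ (Fin n)) (I₁ : Set ℝ)
    (q : ℝ → EuclideanSpace ℝ (Fin n)) (I : Set ℝ) : Prop :=
  I ∩ T ⊆ I₁ ∩ T ∧ EqOn q₁ q (I ∩ T)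

/-- `(q, I_𝕋)` is a maximal solution of (Δ-CP). -/
def IsMaxSol {n : ℕ} (T : Set ℝ) (Ω : Set (EuclideanSpace ℝ (Fin n)))
    (f : EuclideanSpace ℝ (Fin n) → ℝ → EuclideanSpace ℝ (Fin n))
    (t₀ : ℝ) (q₀ : EuclideanSpace ℝ (Fin n))
    (q : ℝ → EuclideanSpace ℝ (Fin n)) (I : Set ℝ) : Prop :=
  IsSol T Ω f t₀ q₀ q I ∧
    ∀ q₁ I₁, IsSol T Ω f t₀ q₀ q₁ I₁ → SolExtends T q₁ I₁ q I → I₁ ∩ T = I ∩ T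

/-- `(q, I_𝕋)` is a maximal solution of (Δ-CP^σ). -/
def IsMaxSolS {n : ℕ} (T : Set ℝ) (Ω : Set (EuclideanSpace ℝ (Fin n)))
    (f : EuclideanSpace ℝ (Fin n) → ℝ → EuclideanSpace ℝ (Fin n))
    (t₀ : ℝ) (q₀ : EuclideanSpace ℝ (Fin n))
    (q : ℝ → EuclideanSpace ℝ (Fin n)) (I : Set ℝ) : Prop :=
  IsSolS T Ω f t₀ q₀ q I ∧
    ∀ q₁ I₁, IsSolS T Ω f t₀ q₀ q₁ I₁ → SolExtends T q₁ I₁ q I → I₁ ∩ T = I ∩ T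

/-! ### Jump operators, floor map and the Δ-null sets -/

lemma tsSigma_bddBelow (T : Set ℝ) (t : ℝ) : BddBelow {s | s ∈ T ∧ t < s} :=
  ⟨t, fun _ hs => hs.2.le⟩

lemma le_tsSigma (T : Set ℝ) (t : ℝ) : t ≤ tsSigma T t := by
  unfold tsSigma
  split_ifs with h
  · exact le_csInf h fun _ hs => hs.2.le
  · exact le_rfl

lemma tsSigma_le {T : Set ℝ} {t s : ℝ} (hs : s ∈ T) (h : t < s) : tsSigma T t ≤ s := by
  unfold tsSigma
  rw [if_pos ⟨s, hs, h⟩]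
  exact csInf_le (tsSigma_bddBelow T t) ⟨hs, h⟩

lemma tsSigma_mem {T : Set ℝ} (hT : IsClosed T) {t : ℝ} (ht : t ∈ T) : tsSigma T t ∈ T := by
  unfold tsSigma
  split_ifs with h
  · have h1 := csInf_mem_closure h (tsSigma_bddBelow T t)
    exact hT.closure_subset_iff.2 (fun _ hs => hs.1) h1
  · exact ht

lemma tsSigma_monotone (T : Set ℝ) : Monotone (tsSigma T) := by
  intro s t hst
  rcases hst.eq_or_lt with rfl | hst
  · exact le_rfl
  by_cases h : ({r | r ∈ T ∧ t < r}).Nonempty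
  · have : tsSigma T t = sInf {r | r ∈ T ∧ t < r} := if_pos h
    rw [this]
    exact le_csInf h fun r hr => tsSigma_le hr.1 (hst.trans hr.2)
  · have h1 : tsSigma T t = t := if_neg h
    rw [h1]
    by_cases h' : ({r | r ∈ T ∧ s < r}).Nonempty
    · obtain ⟨r, hr, hsr⟩ := h'
      refine (tsSigma_le hr hsr).trans ?_
      by_contra! hlt
      exact h ⟨r, hr, hlt⟩
    · have h2 : tsSigma T s = s := if_neg h'
      rw [h2]; exact hst.le

/-- Just to the right of a non-maximal right-dense point there are points of `T`. -/
lemma RightDense.exists_mem {T : Set ℝ} {t : ℝ} (h : RightDense T t) {s₀ : ℝ} (hs₀ : s₀ ∈ T)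
    (hts₀ : t < s₀) {x : ℝ} (hx : t < x) : ∃ s ∈ T, t < s ∧ s < x := by
  have hne : ({s | s ∈ T ∧ t < s}).Nonempty := ⟨s₀, hs₀, hts₀⟩
  have h1 : sInf {s | s ∈ T ∧ t < s} = t := by
    have : tsSigma T t = sInf {s | s ∈ T ∧ t < s} := if_pos hne
    rw [← this]; exact h
  obtain ⟨s, hs, hsx⟩ := exists_lt_of_csInf_lt hne (h1.trans_lt hx)
  exact ⟨s, hs.1, hs.2, hsx⟩

lemma rightDense_or_scattered (T : Set ℝ) (t : ℝ) : RightDense T t ∨ RightScattered T t := by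
  rcases (le_tsSigma T t).eq_or_lt with h | h
  · exact Or.inl h.symm
  · exact Or.inr h

lemma RightDense.not_scattered {T : Set ℝ} {t : ℝ} (h : RightDense T t) :
    ¬ RightScattered T t := fun h' => h'.ne' h

lemma tsRho_bddAbove (T : Set ℝ) (t : ℝ) : BddAbove {s | s ∈ T ∧ s < t} :=
  ⟨t, fun _ hs => hs.2.le⟩

lemma le_tsRho {T : Set ℝ} {t s : ℝ} (hs : s ∈ T) (h : s < t) : s ≤ tsRho T t := by
  unfold tsRho
  rw [if_pos ⟨s, hs, h⟩]
  exact le_csSup (tsRho_bddAbove T t) ⟨hs, h⟩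

lemma tsRho_le (T : Set ℝ) (t : ℝ) : tsRho T t ≤ t := by
  unfold tsRho
  split_ifs with h
  · exact csSup_le h fun _ hs => hs.2.le
  · exact le_rfl

lemma tsRho_mem {T : Set ℝ} (hT : IsClosed T) {t : ℝ} (ht : t ∈ T) : tsRho T t ∈ T := by
  unfold tsRho
  split_ifs with h
  · have h1 := csSup_mem_closure h (tsRho_bddAbove T t)
    exact hT.closure_subset_iff.2 (fun _ hs => hs.1) h1
  · exact ht

lemma leftDense_or_lt (T : Set ℝ) (t : ℝ) : LeftDense T t ∨ tsRho T t < t := by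
  rcases (tsRho_le T t).eq_or_lt with h | h
  · exact Or.inl h
  · exact Or.inr h

lemma LeftDense.exists_mem {T : Set ℝ} {t : ℝ} (h : LeftDense T t) {s₀ : ℝ} (hs₀ : s₀ ∈ T)
    (hts₀ : s₀ < t) {x : ℝ} (hx : x < t) : ∃ s ∈ T, x < s ∧ s < t := by
  have hne : ({s | s ∈ T ∧ s < t}).Nonempty := ⟨s₀, hs₀, hts₀⟩
  have h1 : sSup {s | s ∈ T ∧ s < t} = t := by
    have : tsRho T t = sSup {s | s ∈ T ∧ s < t} := if_pos hne
    rw [← this]; exact h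
  obtain ⟨s, hs, hsx⟩ := exists_lt_of_lt_csSup hne (hx.trans_eq h1.symm)
  exact ⟨s, hs.1, hsx, hs.2⟩

lemma countable_rightScattered (T : Set ℝ) : {t | t ∈ T ∧ RightScattered T t}.Countable := by
  refine Set.PairwiseDisjoint.countable_of_Ioo (y := tsSigma T) ?_ fun x hx => hx.2
  have key : ∀ x ∈ T, ∀ y ∈ T, x < y → Disjoint (Ioo x (tsSigma T x)) (Ioo y (tsSigma T y)) := by
    intro x _ y hy hxy
    rw [Set.disjoint_left]
    intro z hz hz'
    exact absurd (tsSigma_le hy hxy) (not_le.2 (hz'.1.trans hz.2))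
  intro x hx y hy hxy
  rcases lt_or_gt_of_ne hxy with h | h
  · exact key x hx.1 y hy.1 h
  · exact (key y hy.1 x hx.1 h).symm

lemma volume_rightScattered (T : Set ℝ) : volume {t | t ∈ T ∧ RightScattered T t} = 0 :=
  (countable_rightScattered T).measure_zero _

/-- A property holds Δ-a.e. on a part `A` of `T` iff it holds at Lebesgue-almost every point of
`A` and at every right-scattered point of `A`, these being the atoms of the Δ-measure. -/
lemma ae_delta_iff {T A : Set ℝ} (hA : MeasurableSet A) (hAT : A ⊆ T) (P : ℝ → Prop) :
    (∀ᵐ t ∂((deltaMeasure T).restrict A), P t) ↔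
      (∀ᵐ t ∂volume, t ∈ A → P t) ∧ ∀ t ∈ A, RightScattered T t → P t := by
  rw [ae_restrict_iff' hA]
  have : Countable {t : ℝ // t ∈ T ∧ RightScattered T t} := (countable_rightScattered T).to_subtype
  unfold deltaMeasure
  rw [ae_add_measure_iff, Measure.ae_sum_iff]
  have h1 : (∀ᵐ t ∂(volume.restrict T), t ∈ A → P t) ↔ ∀ᵐ t ∂volume, t ∈ A → P t := by
    constructor
    · intro h
      have h2 := ae_restrict_of_ae_restrict_of_subset hAT h
      rw [ae_restrict_iff' hA] at h2
      filter_upwards [h2] with t ht hA using ht hA hA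
    · exact fun h => ae_restrict_of_ae h
  rw [h1]
  refine and_congr_right fun _ => ?_
  have h3 : ∀ r : {t : ℝ // t ∈ T ∧ RightScattered T t},
      (∀ᵐ t ∂(ENNReal.ofReal (tsGrain T r.1) • Measure.dirac r.1), t ∈ A → P t) ↔
        (r.1 ∈ A → P r.1) := by
    intro r
    have hne : ENNReal.ofReal (tsGrain T r.1) ≠ 0 := by
      have : 0 < tsGrain T r.1 := sub_pos.2 r.2.2
      simpa using this
    rw [Measure.ae_ennreal_smul_measure_iff hne, ae_dirac_eq]
    rfl
  simp only [h3]
  constructor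
  · exact fun h t htA htR => h ⟨t, hAT htA, htR⟩ htA
  · exact fun h r hr => h r.1 hr r.2.2

/-- The floor map of the time scale above the base point `a`: the last point of `T` in `[a, s]`
(in `[a, a]` if `s < a`). It pushes Lebesgue measure on `[a, b)` forward to the Δ-measure. -/
def tsFloor (T : Set ℝ) (a s : ℝ) : ℝ := sSup (T ∩ Icc a (max a s))

lemma tsFloor_bdd (T : Set ℝ) (a s : ℝ) : BddAbove (T ∩ Icc a (max a s)) :=
  ⟨max a s, fun _ h => h.2.2⟩

lemma tsFloor_monotone {T : Set ℝ} {a : ℝ} (ha : a ∈ T) : Monotone (tsFloor T a) := by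
  intro s t hst
  refine csSup_le_csSup (tsFloor_bdd T a t) ⟨a, ha, le_rfl, le_max_left _ _⟩ ?_
  exact inter_subset_inter_right _ (Icc_subset_Icc_right (max_le_max le_rfl hst))

lemma tsFloor_spec {T : Set ℝ} (hT : IsClosed T) {a s : ℝ} (ha : a ∈ T) (has : a ≤ s) :
    tsFloor T a s ∈ T ∧ a ≤ tsFloor T a s ∧ tsFloor T a s ≤ s := by
  have hne : (T ∩ Icc a (max a s)).Nonempty := ⟨a, ha, le_rfl, le_max_left _ _⟩
  have := (hT.inter isClosed_Icc).csSup_mem hne (tsFloor_bdd T a s)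
  refine ⟨this.1, this.2.1, this.2.2.trans (max_le has le_rfl)⟩

lemma le_tsFloor {T : Set ℝ} {a s t : ℝ} (ht : t ∈ T) (hat : a ≤ t) (hts : t ≤ s) :
    t ≤ tsFloor T a s :=
  le_csSup (tsFloor_bdd T a s) ⟨ht, hat, hts.trans (le_max_right _ _)⟩

lemma tsFloor_of_mem {T : Set ℝ} (hT : IsClosed T) {a s : ℝ} (ha : a ∈ T) (has : a ≤ s)
    (hs : s ∈ T) : tsFloor T a s = s :=
  le_antisymm (tsFloor_spec hT ha has).2.2 (le_tsFloor hs has le_rfl)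

/-- On a gap `[t, σ(t))` the floor map is constant. -/
lemma tsFloor_gap {T : Set ℝ} (hT : IsClosed T) {a s t : ℝ} (ha : a ∈ T) (ht : t ∈ T)
    (hat : a ≤ t) (hts : t ≤ s) (hs : s < tsSigma T t) : tsFloor T a s = t := by
  have h := tsFloor_spec hT ha (hat.trans hts)
  refine le_antisymm ?_ (le_tsFloor ht hat hts)
  by_contra! hlt
  exact absurd (tsSigma_le h.1 hlt) (not_le.2 (h.2.2.trans_lt hs))

/-- A point outside `T` lies in the gap to the right of its floor. -/
lemma tsFloor_scattered {T : Set ℝ} (hT : IsClosed T) {a b s : ℝ} (ha : a ∈ T) (hb : b ∈ T)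
    (has : a ≤ s) (hsb : s < b) (hs : s ∉ T) : RightScattered T (tsFloor T a s) := by
  have h := tsFloor_spec hT ha has
  have hlt : tsFloor T a s < s := lt_of_le_of_ne h.2.2 fun e => hs (e ▸ h.1)
  rcases rightDense_or_scattered T (tsFloor T a s) with h1 | h1
  · obtain ⟨r, hr, hr1, hr2⟩ := h1.exists_mem hb (h.2.2.trans_lt hsb) hlt
    exact absurd (le_tsFloor hr (h.2.1.trans hr1.le) hr2.le) (not_le.2 hr1)
  · exact h1

/-- A Δ-a.e. property on `[a, b)_𝕋` holds along the floor map at Lebesgue-a.e. point of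
`[a, b)`. -/
lemma ae_tsFloor {T : Set ℝ} (hT : IsClosed T) {a b : ℝ} (ha : a ∈ T) (hb : b ∈ T) {P : ℝ → Prop}
    (h : ∀ᵐ t ∂((deltaMeasure T).restrict (Ico a b ∩ T)), P t) :
    ∀ᵐ s ∂volume, s ∈ Ico a b → P (tsFloor T a s) := by
  rw [ae_delta_iff (measurableSet_Ico.inter hT.measurableSet) inter_subset_right] at h
  filter_upwards [h.1] with s hs hsab
  by_cases hsT : s ∈ T
  · rw [tsFloor_of_mem hT ha hsab.1 hsT]; exact hs ⟨hsab, hsT⟩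
  · have h1 := tsFloor_spec hT ha hsab.1
    exact h.2 _ ⟨⟨h1.2.1, h1.2.2.trans_lt hsab.2⟩, h1.1⟩ (tsFloor_scattered hT ha hb hsab.1 hsab.2 hsT)

/-! ### Absolute continuity on time scales -/

/-- The family in the definition of absolute continuity may be indexed by any finite set. -/
lemma DeltaAC.finset {n : ℕ} {T : Set ℝ} {a b : ℝ} {q : ℝ → EuclideanSpace ℝ (Fin n)}
    (h : DeltaAC T a b q) {ε : ℝ} (hε : 0 < ε) :
    ∃ δ > (0 : ℝ), ∀ (A : Finset ℕ) (u v : ℕ → ℝ),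
      (∀ k ∈ A, u k ∈ Icc a b ∩ T) → (∀ k ∈ A, v k ∈ Icc a b ∩ T) → (∀ k ∈ A, u k ≤ v k) →
      (∀ i ∈ A, ∀ j ∈ A, i ≠ j → Disjoint (Icc (u i) (v i)) (Icc (u j) (v j))) →
      (∑ k ∈ A, (v k - u k)) < δ → (∑ k ∈ A, ‖q (v k) - q (u k)‖) < ε := by
  obtain ⟨δ, hδ, H⟩ := h ε hε
  refine ⟨δ, hδ, fun A u v hu hv huv hd hs => ?_⟩
  let e : Fin A.card ≃ A := A.equivFin.symm
  let i : ℕ → ℕ := fun k => if hk : k < A.card then (e ⟨k, hk⟩ : ℕ) else 0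
  have hi : ∀ k (hk : k < A.card), i k = e ⟨k, hk⟩ := fun k hk => dif_pos hk
  have hiA : ∀ k < A.card, i k ∈ A := fun k hk => by rw [hi k hk]; exact (e ⟨k, hk⟩).2
  have hsum : ∀ F : ℕ → ℝ, ∑ k ∈ Finset.range A.card, F (i k) = ∑ k ∈ A, F k := by
    intro F
    rw [Finset.sum_range, ← Finset.sum_coe_sort A F, ← Equiv.sum_comp e]
    refine Finset.sum_congr rfl fun k _ => ?_
    rw [hi k k.2]
  have := H A.card (fun k => u (i k)) (fun k => v (i k)) (fun k hk => hu _ (hiA k hk))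
    (fun k hk => hv _ (hiA k hk)) (fun k hk => huv _ (hiA k hk))
    (fun k hk l hl hkl => hd _ (hiA k hk) _ (hiA l hl) fun he => hkl ?_)
    (by rw [hsum fun k => v k - u k]; exact hs)
  · rwa [hsum fun k => ‖q (v k) - q (u k)‖] at this
  · rw [hi k hk, hi l hl] at he
    have := e.injective (Subtype.ext he)
    simpa using this

lemma DeltaAC.mono {n : ℕ} {T : Set ℝ} {a b a' b' : ℝ} {q : ℝ → EuclideanSpace ℝ (Fin n)}
    (h : DeltaAC T a b q) (ha : a ≤ a') (hb : b' ≤ b) : DeltaAC T a' b' q := by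
  intro ε hε
  obtain ⟨δ, hδ, H⟩ := h ε hε
  have hsub : Icc a' b' ∩ T ⊆ Icc a b ∩ T := inter_subset_inter_left _ (Icc_subset_Icc ha hb)
  exact ⟨δ, hδ, fun m u v hu hv => H m u v (fun k hk => hsub (hu k hk)) fun k hk => hsub (hv k hk)⟩

lemma DeltaAC.congr {n : ℕ} {T : Set ℝ} {a b : ℝ} {q y : ℝ → EuclideanSpace ℝ (Fin n)}
    (h : DeltaAC T a b q) (hqy : EqOn y q (Icc a b ∩ T)) : DeltaAC T a b y := by
  intro ε hε
  obtain ⟨δ, hδ, H⟩ := h ε hε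
  refine ⟨δ, hδ, fun m u v hu hv huv hd hs => ?_⟩
  have h1 := H m u v hu hv huv hd hs
  have : ∑ k ∈ Finset.range m, ‖y (v k) - y (u k)‖ = ∑ k ∈ Finset.range m, ‖q (v k) - q (u k)‖ :=
    Finset.sum_congr rfl fun k hk => by
      rw [hqy (hu k (Finset.mem_range.1 hk)), hqy (hv k (Finset.mem_range.1 hk))]
  rwa [this]

lemma DeltaAC.of_lipschitz {n : ℕ} {T : Set ℝ} {a b : ℝ} {q : ℝ → EuclideanSpace ℝ (Fin n)}
    {C : ℝ} (h : ∀ u ∈ Icc a b ∩ T, ∀ v ∈ Icc a b ∩ T, u ≤ v → ‖q v - q u‖ ≤ C * (v - u)) :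
    DeltaAC T a b q := by
  intro ε hε
  refine ⟨ε / (|C| + 1), by positivity, fun m u v hu hv huv _ hs => ?_⟩
  have h1 : ∑ k ∈ Finset.range m, ‖q (v k) - q (u k)‖ ≤
      (|C| + 1) * ∑ k ∈ Finset.range m, (v k - u k) := by
    rw [Finset.mul_sum]
    refine Finset.sum_le_sum fun k hk => ?_
    have hk := Finset.mem_range.1 hk
    refine (h _ (hu k hk) _ (hv k hk) (huv k hk)).trans ?_
    have := huv k hk
    have := le_abs_self C
    gcongr
    linarith
  have h2 := (lt_div_iff₀' (by positivity : (0 : ℝ) < |C| + 1)).1 hs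
  linarith

/-- Absolute continuity on two adjacent segments gives it on their union: an interval is cut by
clamping its endpoints to each segment, and the clamped intervals that stay nondegenerate are
still disjoint. -/
lemma DeltaAC.glue {n : ℕ} {T : Set ℝ} {a c b : ℝ} {q : ℝ → EuclideanSpace ℝ (Fin n)}
    (hac : a ≤ c) (hcb : c ≤ b) (haT : a ∈ T) (hcT : c ∈ T) (hbT : b ∈ T)
    (h1 : DeltaAC T a c q) (h2 : DeltaAC T c b q) : DeltaAC T a b q := by
  have key : ∀ {a' b' : ℝ}, a' ≤ b' → a' ∈ T → b' ∈ T → DeltaAC T a' b' q → ∀ ε > (0 : ℝ),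
      ∃ δ > (0 : ℝ), ∀ (m : ℕ) (u v : ℕ → ℝ),
        (∀ k < m, u k ∈ T) → (∀ k < m, v k ∈ T) → (∀ k < m, u k ≤ v k) →
        (∀ i < m, ∀ j < m, i ≠ j → Disjoint (Icc (u i) (v i)) (Icc (u j) (v j))) →
        (∑ k ∈ Finset.range m, (v k - u k)) < δ →
        (∑ k ∈ Finset.range m,
          ‖q (max a' (min b' (v k))) - q (max a' (min b' (u k)))‖) < ε := by
    intro a' b' hab ha' hb' h ε hε
    obtain ⟨δ, hδ, H⟩ := h.finset hε
    refine ⟨δ, hδ, fun m u v hu hv huv hd hs => ?_⟩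
    let p : ℝ → ℝ := fun x => max a' (min b' x)
    have hpm : ∀ x ∈ T, p x ∈ Icc a' b' ∩ T := by
      intro x hx
      refine ⟨⟨le_max_left _ _, max_le hab (min_le_left _ _)⟩, ?_⟩
      simp only [p]
      rcases max_choice a' (min b' x) with h | h <;> rw [h]
      · exact ha'
      · rcases min_choice b' x with h | h <;> rw [h] <;> assumption
    have hmono : Monotone p := fun x y hxy => max_le_max le_rfl (min_le_min le_rfl hxy)
    let A : Finset ℕ := (Finset.range m).filter fun k => p (u k) < p (v k)
    have hA : ∀ k ∈ A, k < m ∧ p (u k) < p (v k) := fun k hk => by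
      simpa [A] using hk
    have hsub : ∀ k ∈ A, Icc (p (u k)) (p (v k)) ⊆ Icc (u k) (v k) := by
      intro k hk
      obtain ⟨hkm, hlt⟩ := hA k hk
      have := huv k hkm
      refine Icc_subset_Icc ?_ ?_
      · simp only [p] at hlt ⊢
        grind
      · simp only [p] at hlt ⊢
        grind
    have hlen : ∀ k ∈ A, p (v k) - p (u k) ≤ v k - u k := by
      intro k hk
      have := hsub k hk
      obtain ⟨hkm, hlt⟩ := hA k hk
      have := (Icc_subset_Icc_iff hlt.le).1 this
      linarith
    have h3 := H A (fun k => p (u k)) (fun k => p (v k)) (fun k hk => hpm _ (hu k (hA k hk).1))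
      (fun k hk => hpm _ (hv k (hA k hk).1)) (fun k hk => (hA k hk).2.le)
      (fun i hi j hj hij => (hd i (hA i hi).1 j (hA j hj).1 hij).mono (hsub i hi) (hsub j hj)) ?_
    · refine lt_of_eq_of_lt ?_ h3
      symm
      refine Finset.sum_subset (Finset.filter_subset _ _) fun k hk hkA => ?_
      have hle := hmono (huv k (Finset.mem_range.1 hk))
      have : p (u k) = p (v k) := by
        refine hle.antisymm (not_lt.1 fun hlt => hkA ?_)
        exact Finset.mem_filter.2 ⟨hk, hlt⟩
      rw [this]; simp
    · refine lt_of_le_of_lt (Finset.sum_le_sum hlen) (lt_of_le_of_lt ?_ hs)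
      refine Finset.sum_le_sum_of_subset_of_nonneg (Finset.filter_subset _ _) fun k hk _ => ?_
      exact sub_nonneg.2 (huv k (Finset.mem_range.1 hk))
  intro ε hε
  obtain ⟨δ₁, hδ₁, H₁⟩ := key hac haT hcT h1 (ε / 2) (half_pos hε)
  obtain ⟨δ₂, hδ₂, H₂⟩ := key hcb hcT hbT h2 (ε / 2) (half_pos hε)
  refine ⟨min δ₁ δ₂, lt_min hδ₁ hδ₂, fun m u v hu hv huv hd hs => ?_⟩
  have e1 := H₁ m u v (fun k hk => (hu k hk).2) (fun k hk => (hv k hk).2) huv hd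
    (hs.trans_le (min_le_left _ _))
  have e2 := H₂ m u v (fun k hk => (hu k hk).2) (fun k hk => (hv k hk).2) huv hd
    (hs.trans_le (min_le_right _ _))
  refine lt_of_le_of_lt ?_ ((add_lt_add e1 e2).trans_eq (add_halves ε))
  rw [← Finset.sum_add_distrib]
  refine Finset.sum_le_sum fun k hk => ?_
  obtain ⟨hu', hv', huv'⟩ := And.intro (hu k (Finset.mem_range.1 hk)).1
    (And.intro (hv k (Finset.mem_range.1 hk)).1 (huv k (Finset.mem_range.1 hk)))
  rcases le_total (v k) c with h | h
  · have x1 : max a (min c (v k)) = v k := by rw [min_eq_right h, max_eq_right hv'.1]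
    have x2 : max a (min c (u k)) = u k := by rw [min_eq_right (huv'.trans h), max_eq_right hu'.1]
    rw [x1, x2]
    exact le_add_of_nonneg_right (norm_nonneg _)
  · have y1 : max c (min b (v k)) = v k := by rw [min_eq_right hv'.2, max_eq_right h]
    have x1 : max a (min c (v k)) = c := by rw [min_eq_left h, max_eq_right hac]
    rcases le_total (u k) c with h' | h'
    · have x2 : max a (min c (u k)) = u k := by rw [min_eq_right h', max_eq_right hu'.1]
      have y2 : max c (min b (u k)) = c := by rw [min_eq_right hu'.2, max_eq_left h']
      rw [x1, x2, y1, y2]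
      calc ‖q (v k) - q (u k)‖ = ‖(q c - q (u k)) + (q (v k) - q c)‖ := by congr 1; abel
        _ ≤ _ := norm_add_le _ _
    · have y2 : max c (min b (u k)) = u k := by rw [min_eq_right hu'.2, max_eq_right h']
      rw [y1, y2]
      exact le_add_of_nonneg_left (norm_nonneg _)

lemma DeltaAC.continuousWithinAt {n : ℕ} {T : Set ℝ} {a b t : ℝ}
    {q : ℝ → EuclideanSpace ℝ (Fin n)} (h : DeltaAC T a b q) (ht : t ∈ Icc a b ∩ T) :
    ContinuousWithinAt q (Icc a b ∩ T) t := by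
  rw [Metric.continuousWithinAt_iff]
  intro ε hε
  obtain ⟨δ, hδ, H⟩ := h ε hε
  refine ⟨δ, hδ, fun {s} hs hst => ?_⟩
  rw [Real.dist_eq] at hst
  have key : ∀ x ∈ Icc a b ∩ T, ∀ y ∈ Icc a b ∩ T, x ≤ y → y - x < δ → ‖q y - q x‖ < ε := by
    intro x hx y hy hxy hlt
    have := H 1 (fun _ => x) (fun _ => y) (fun _ _ => hx) (fun _ _ => hy) (fun _ _ => hxy)
      (fun i hi j hj hij => absurd (by omega : i = j) hij) (by simpa using hlt)
    simpa using this
  rw [dist_eq_norm]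
  rcases le_total s t with hle | hle
  · rw [norm_sub_rev]
    exact key s hs t ht hle (by rw [abs_sub_comm] at hst; exact (le_abs_self _).trans_lt hst)
  · exact key t ht s hs hle ((le_abs_self _).trans_lt hst)

/-! ### The Δ-derivative -/

lemma HasDeltaDerivAt.congr_local {n : ℕ} {T : Set ℝ} {q y : ℝ → EuclideanSpace ℝ (Fin n)}
    {p : EuclideanSpace ℝ (Fin n)} {t : ℝ} (h : HasDeltaDerivAt T q p t) {U : Set ℝ}
    (hU : U ∈ nhds t) (hqy : EqOn y q (U ∩ T)) (hs : y (tsSigma T t) = q (tsSigma T t)) :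
    HasDeltaDerivAt T y p t := by
  intro ε hε
  obtain ⟨V, hV, H⟩ := h ε hε
  refine ⟨V ∩ U, inter_mem hV hU, fun s hs' => ?_⟩
  rw [hs, hqy ⟨hs'.1.2, hs'.2⟩]
  exact H s ⟨hs'.1.1, hs'.2⟩

lemma HasDeltaDerivAt.sub_eq {n : ℕ} {T : Set ℝ} {q : ℝ → EuclideanSpace ℝ (Fin n)}
    {p : EuclideanSpace ℝ (Fin n)} {t : ℝ} (h : HasDeltaDerivAt T q p t) (ht : t ∈ T) :
    q (tsSigma T t) - q t = (tsSigma T t - t) • p := by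
  rw [← sub_eq_zero, ← norm_le_zero_iff]
  have hle := le_tsSigma T t
  refine le_of_forall_pos_le_add fun ε hε => ?_
  obtain ⟨V, hV, H⟩ := h (ε / (tsSigma T t - t + 1)) (by apply div_pos hε; linarith)
  refine (H t ⟨mem_of_mem_nhds hV, ht⟩).trans ?_
  rw [abs_of_nonneg (sub_nonneg.2 hle), zero_add, div_mul_eq_mul_div,
    div_le_iff₀ (by linarith)]
  nlinarith

lemma hasDeltaDerivAt_of_scattered {n : ℕ} {T : Set ℝ} {q : ℝ → EuclideanSpace ℝ (Fin n)}
    {p : EuclideanSpace ℝ (Fin n)} {t : ℝ} (ht : RightScattered T t)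
    (h : q (tsSigma T t) - q t = (tsSigma T t - t) • p) (hc : ContinuousWithinAt q T t) :
    HasDeltaDerivAt T q p t := by
  intro ε hε
  have h1 : Tendsto (fun s => ‖q (tsSigma T t) - q s - (tsSigma T t - s) • p‖)
      (nhdsWithin t T) (nhds ‖q (tsSigma T t) - q t - (tsSigma T t - t) • p‖) := by
    have hid : Tendsto (fun s : ℝ => s) (nhdsWithin t T) (nhds t) :=
      tendsto_id.mono_left nhdsWithin_le_nhds
    exact ((tendsto_const_nhds.sub hc).sub ((tendsto_const_nhds.sub hid).smul_const p)).norm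
  have h2 : Tendsto (fun s => ε * |tsSigma T t - s|)
      (nhdsWithin t T) (nhds (ε * |tsSigma T t - t|)) := by
    have : Continuous fun s => ε * |tsSigma T t - s| := by fun_prop
    exact this.continuousAt.tendsto.mono_left nhdsWithin_le_nhds
  have h3 : ‖q (tsSigma T t) - q t - (tsSigma T t - t) • p‖ < ε * |tsSigma T t - t| := by
    rw [h, sub_self, norm_zero]
    have : 0 < tsSigma T t - t := sub_pos.2 ht
    positivity
  have h4 := h1.eventually_lt h2 h3
  rw [eventually_nhdsWithin_iff] at h4
  exact ⟨_, h4, fun s hs => (hs.1 hs.2).le⟩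

lemma HasDerivAt.hasDeltaDerivAt {n : ℕ} {T : Set ℝ} {q : ℝ → EuclideanSpace ℝ (Fin n)}
    {p : EuclideanSpace ℝ (Fin n)} {t : ℝ} (h : HasDerivAt q p t) (ht : RightDense T t) :
    HasDeltaDerivAt T q p t := by
  intro ε hε
  refine ⟨_, (hasDerivAt_iff_isLittleO.1 h).def hε, fun s hs => ?_⟩
  have h1 : ‖q s - q t - (s - t) • p‖ ≤ ε * ‖s - t‖ := hs.1
  have h2 : tsSigma T t = t := ht
  rw [h2, ← norm_neg, abs_sub_comm, ← Real.norm_eq_abs]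
  have h3 : -(q t - q s - (t - s) • p) = q s - q t - (s - t) • p := by
    rw [sub_smul, sub_smul]; abel
  rw [h3]
  exact h1

/-! ### The mean value inequality -/

/-- `FamilyBound T U q M a b c w`: the increment of `q` from `a` to `c` is at most `M * (c - a)`
plus the increments of `q` over finitely many pairwise disjoint intervals with endpoints in
`[a, b]_𝕋`, contained in `U` and lying strictly to the left of `w`. -/
def FamilyBound {n : ℕ} (T U : Set ℝ) (q : ℝ → EuclideanSpace ℝ (Fin n)) (M a b c w : ℝ) : Prop :=
  ∃ (m : ℕ) (u v : ℕ → ℝ), (∀ k < m, u k ∈ Icc a b ∩ T) ∧ (∀ k < m, v k ∈ Icc a b ∩ T) ∧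
    (∀ k < m, u k ≤ v k) ∧ (∀ k < m, v k < w) ∧ (∀ k < m, Icc (u k) (v k) ⊆ U) ∧
    (∀ i < m, ∀ j < m, i ≠ j → Disjoint (Icc (u i) (v i)) (Icc (u j) (v j))) ∧
    ‖q c - q a‖ ≤ M * (c - a) + ∑ k ∈ Finset.range m, ‖q (v k) - q (u k)‖

/-- The point `t` is reached from a point `c` at which `FamilyBound` holds with intervals strictly
to the left of `c`, and either `c = t` or `[c, t]` is contained in `U`. Keeping this last interval
apart from the family allows it to grow, so that adjacent intervals of `U` are merged. -/
def Chain {n : ℕ} (T U : Set ℝ) (q : ℝ → EuclideanSpace ℝ (Fin n)) (M a b t : ℝ) : Prop :=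
  ∃ c ∈ Icc a b ∩ T, c ≤ t ∧ FamilyBound T U q M a b c c ∧ (c = t ∨ Icc c t ⊆ U)

/-- The family may be completed by an interval `[c, t]` of `U`, which is disjoint from the
previous ones. -/
lemma FamilyBound.append {n : ℕ} {T U : Set ℝ} {q : ℝ → EuclideanSpace ℝ (Fin n)}
    {M a b c t : ℝ} (h : FamilyBound T U q M a b c c) (hc : c ∈ Icc a b ∩ T)
    (ht : t ∈ Icc a b ∩ T) (hct : c ≤ t) (hU : Icc c t ⊆ U) (hM : 0 ≤ M) {w : ℝ} (htw : t < w) :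
    FamilyBound T U q M a b t w := by
  obtain ⟨m, u, v, h1, h2, h3, h4, h5, h6, h7⟩ := h
  have hlt : ∀ {k : ℕ}, k < m + 1 → ¬ k < m → k = m := fun h h' => by omega
  refine ⟨m + 1, fun k => if k < m then u k else c, fun k => if k < m then v k else t,
    fun k hk => ?_, fun k hk => ?_, fun k hk => ?_, fun k hk => ?_, fun k hk => ?_,
    fun i hi j hj hij => ?_, ?_⟩
  · dsimp only; split_ifs with hkm
    exacts [h1 k hkm, hc]
  · dsimp only; split_ifs with hkm
    exacts [h2 k hkm, ht]
  · dsimp only; split_ifs with hkm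
    exacts [h3 k hkm, hct]
  · dsimp only; split_ifs with hkm
    exacts [(h4 k hkm).trans_le (hct.trans htw.le), htw]
  · dsimp only; split_ifs with hkm
    exacts [h5 k hkm, hU]
  · dsimp only
    have aux : ∀ k < m, Disjoint (Icc (u k) (v k)) (Icc c t) := by
      intro k hk
      rw [Set.disjoint_left]
      intro x hx hx'
      exact absurd (hx'.1.trans hx.2) (not_le.2 (h4 k hk))
    by_cases hi' : i < m
    · by_cases hj' : j < m
      · simpa only [if_pos hi', if_pos hj'] using h6 i hi' j hj' hij
      · simpa only [if_pos hi', if_neg hj'] using aux i hi'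
    · by_cases hj' : j < m
      · simpa only [if_neg hi', if_pos hj'] using (aux j hj').symm
      · exact absurd ((hlt hi hi').trans (hlt hj hj').symm) hij
  · rw [Finset.sum_range_succ]
    simp only [lt_irrefl, if_false]
    have e : ∑ k ∈ Finset.range m, ‖q (if k < m then v k else t) - q (if k < m then u k else c)‖ =
        ∑ k ∈ Finset.range m, ‖q (v k) - q (u k)‖ :=
      Finset.sum_congr rfl fun k hk => by rw [if_pos (Finset.mem_range.1 hk),
        if_pos (Finset.mem_range.1 hk)]
    rw [e]
    have e1 : ‖q t - q a‖ ≤ ‖q t - q c‖ + ‖q c - q a‖ := by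
      calc ‖q t - q a‖ = ‖(q t - q c) + (q c - q a)‖ := by congr 1; abel
        _ ≤ _ := norm_add_le _ _
    nlinarith

lemma FamilyBound.step {n : ℕ} {T U : Set ℝ} {q : ℝ → EuclideanSpace ℝ (Fin n)}
    {M a b s t w w' : ℝ} (h : FamilyBound T U q M a b s w) (hw : w ≤ w')
    (H : ‖q t - q s‖ ≤ M * (t - s)) : FamilyBound T U q M a b t w' := by
  obtain ⟨m, u, v, k1, k2, k3, k4, k5, k6, k7⟩ := h
  refine ⟨m, u, v, k1, k2, k3, fun k hk => (k4 k hk).trans_le hw, k5, k6, ?_⟩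
  have e1 : ‖q t - q a‖ ≤ ‖q t - q s‖ + ‖q s - q a‖ := by
    calc ‖q t - q a‖ = ‖(q t - q s) + (q s - q a)‖ := by congr 1; abel
      _ ≤ _ := norm_add_le _ _
  linarith

lemma Chain.step {n : ℕ} {T U : Set ℝ} {q : ℝ → EuclideanSpace ℝ (Fin n)}
    {M a b s t : ℝ} (h : Chain T U q M a b s) (hs : s ∈ Icc a b ∩ T) (ht : t ∈ Icc a b ∩ T)
    (hst : s < t) (hM : 0 ≤ M) (H : ‖q t - q s‖ ≤ M * (t - s) ∨ Icc s t ⊆ U) :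
    Chain T U q M a b t := by
  obtain ⟨c, hc, hcs, hch, h1⟩ := h
  rcases H with H | H
  · refine ⟨t, ht, le_rfl, ?_, Or.inl rfl⟩
    rcases h1 with rfl | h1
    · exact hch.step hst.le H
    · exact (hch.append hc hs hcs h1 hM hst).step le_rfl H
  · rcases h1 with rfl | h1
    · exact ⟨c, hc, hst.le, hch, Or.inr H⟩
    · refine ⟨c, hc, hcs.trans hst.le, hch, Or.inr ?_⟩
      rw [← Icc_union_Icc_eq_Icc hcs hst.le]
      exact union_subset h1 H

/-- If `q` is absolutely continuous and its increments over gaps and its Δ-derivative at almost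
every right-dense point are bounded by `M`, then `‖q b - q a‖ ≤ M * (b - a)`. The exceptional
points, together with the right-scattered points (where the Δ-derivative carries no information on
the left) and the two endpoints, form a null set; it is covered by a small open set `U`, and `b` is
reached from `a` by steps that are either controlled by the derivative or inside `U`. -/
theorem DeltaAC.norm_sub_le {n : ℕ} {T : Set ℝ} (hT : IsClosed T) {a b : ℝ} (ha : a ∈ T)
    (hb : b ∈ T) (hab : a ≤ b) {q : ℝ → EuclideanSpace ℝ (Fin n)} {M : ℝ} (hM : 0 ≤ M)
    (h : DeltaAC T a b q)
    (hs : ∀ t ∈ Ico a b ∩ T, RightScattered T t →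
      ‖q (tsSigma T t) - q t‖ ≤ M * (tsSigma T t - t))
    (hd : ∀ᵐ t ∂volume, t ∈ Ioo a b ∩ T → RightDense T t →
      ∃ p, ‖p‖ ≤ M ∧ HasDeltaDerivAt T q p t) :
    ‖q b - q a‖ ≤ M * (b - a) := by
  have main : ∀ ε > (0 : ℝ), ‖q b - q a‖ ≤ (M + ε) * (b - a) + ε := by
    intro ε hε
    obtain ⟨δ, hδ, H⟩ := h ε hε
    have hM' : 0 ≤ M + ε := by linarith
    let G : Set ℝ := {t | RightDense T t ∧ ∃ p, ‖p‖ ≤ M ∧ HasDeltaDerivAt T q p t}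
    let N : Set ℝ := (Icc a b ∩ T) \ G
    have hN : volume N = 0 := by
      have hsub : N ⊆ {t | ¬ (t ∈ Ioo a b ∩ T → RightDense T t →
          ∃ p, ‖p‖ ≤ M ∧ HasDeltaDerivAt T q p t)} ∪ {t | t ∈ T ∧ RightScattered T t} ∪ {a, b} := by
        intro t ht
        by_contra hcon
        simp only [mem_union, mem_ofPred_eq, not_or, not_not, mem_insert_iff,
          mem_singleton_iff] at hcon
        obtain ⟨⟨c1, c2⟩, c3, c4⟩ := hcon
        have hrd : RightDense T t := (rightDense_or_scattered T t).resolve_right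
          fun h => c2 ⟨ht.1.2, h⟩
        exact ht.2 ⟨hrd, c1 ⟨⟨lt_of_le_of_ne ht.1.1.1 (Ne.symm c3),
          lt_of_le_of_ne ht.1.1.2 c4⟩, ht.1.2⟩ hrd⟩
      refine measure_mono_null hsub (measure_union_null (measure_union_null (ae_iff.1 hd)
        (volume_rightScattered T)) ?_)
      exact (Set.toFinite {a, b}).measure_zero _
    obtain ⟨U, hNU, hUo, hUδ⟩ := Set.exists_isOpen_lt_of_lt N (ENNReal.ofReal δ)
      (by rw [hN]; simpa using hδ)
    -- near a point of `U` every interval is in `U`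
    have hUnhds : ∀ t ∈ U, ∃ r > 0, Ioo (t - r) (t + r) ⊆ U := by
      intro t ht
      obtain ⟨r, hr, hrU⟩ := Metric.isOpen_iff.1 hUo t ht
      rw [Real.ball_eq_Ioo] at hrU
      exact ⟨r, hr, hrU⟩
    -- near a good point the increments of `q` are controlled by the derivative
    have hGnhds : ∀ t ∈ G, ∃ r > 0, ∀ s ∈ Ioo (t - r) (t + r) ∩ T,
        ‖q t - q s‖ ≤ (M + ε) * |t - s| := by
      rintro t ⟨hrd, p, hp, hder⟩
      obtain ⟨V, hV, hVb⟩ := hder ε hε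
      obtain ⟨r, hr, hrV⟩ := Metric.mem_nhds_iff.1 hV
      rw [Real.ball_eq_Ioo] at hrV
      refine ⟨r, hr, fun s hs => ?_⟩
      have h1 := hVb s ⟨hrV hs.1, hs.2⟩
      have h2 : tsSigma T t = t := hrd
      rw [h2] at h1
      calc ‖q t - q s‖ = ‖(q t - q s - (t - s) • p) + (t - s) • p‖ := by congr 1; abel
        _ ≤ ε * |t - s| + |t - s| * ‖p‖ := by
          refine (norm_add_le _ _).trans (add_le_add h1 ?_)
          rw [norm_smul, Real.norm_eq_abs]
        _ ≤ (M + ε) * |t - s| := by nlinarith [abs_nonneg (t - s)]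
    let S : Set ℝ := {t | t ∈ Icc a b ∩ T ∧ Chain T U q (M + ε) a b t}
    have haS : a ∈ S := by
      refine ⟨⟨⟨le_rfl, hab⟩, ha⟩, a, ⟨⟨le_rfl, hab⟩, ha⟩, le_rfl,
        ⟨0, fun _ => a, fun _ => a, ?_⟩, Or.inl rfl⟩
      simp
    have hSb : BddAbove S := ⟨b, fun t ht => ht.1.1.2⟩
    have hSne : S.Nonempty := ⟨a, haS⟩
    set c := sSup S with hcdef
    have hcT : c ∈ Icc a b ∩ T := by
      have h1 := csSup_mem_closure hSne hSb
      exact (isClosed_Icc.inter hT).closure_subset_iff.2 (fun _ ht => ht.1) h1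
    have hcS : c ∈ S := by
      by_contra hcS
      have hlt : ∀ x < c, ∃ s ∈ S, x < s ∧ s < c := by
        intro x hx
        obtain ⟨s, hs, hxs⟩ := exists_lt_of_lt_csSup hSne hx
        exact ⟨s, hs, hxs, lt_of_le_of_ne (le_csSup hSb hs) fun e => hcS (e ▸ hs)⟩
      by_cases hcG : c ∈ G
      · obtain ⟨r, hr, hrb⟩ := hGnhds c hcG
        obtain ⟨s, hs, hs1, hs2⟩ := hlt (c - r) (by linarith)
        refine hcS ⟨hcT, hs.2.step hs.1 hcT hs2 hM' (Or.inl ?_)⟩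
        have := hrb s ⟨⟨hs1, by linarith⟩, hs.1.2⟩
        rwa [abs_of_pos (sub_pos.2 hs2)] at this
      · obtain ⟨r, hr, hrU⟩ := hUnhds c (hNU ⟨hcT, hcG⟩)
        obtain ⟨s, hs, hs1, hs2⟩ := hlt (c - r) (by linarith)
        refine hcS ⟨hcT, hs.2.step hs.1 hcT hs2 hM' (Or.inr ?_)⟩
        exact fun x hx => hrU ⟨by linarith [hx.1], by linarith [hx.2]⟩
    have hcb : c = b := by
      by_contra hne
      have hcb : c < b := lt_of_le_of_ne hcT.1.2 hne
      have hno : ∀ t ∈ Icc a b ∩ T, c < t →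
          ¬ (‖q t - q c‖ ≤ (M + ε) * (t - c) ∨ Icc c t ⊆ U) := by
        intro t ht hct H'
        exact absurd (le_csSup hSb (show t ∈ S from ⟨ht, hcS.2.step hcT ht hct hM' H'⟩))
          (not_le.2 hct)
      rcases rightDense_or_scattered T c with hrd | hrs
      · by_cases hcG : c ∈ G
        · obtain ⟨r, hr, hrb⟩ := hGnhds c hcG
          obtain ⟨t, ht, ht1, ht2⟩ := hrd.exists_mem hb hcb
            (x := min b (c + r)) (lt_min hcb (by linarith))
          refine hno t ⟨⟨hcT.1.1.trans ht1.le, (ht2.trans_le (min_le_left _ _)).le⟩, ht⟩ ht1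
            (Or.inl ?_)
          have h1 := hrb t ⟨⟨by linarith, ht2.trans_le (min_le_right _ _)⟩, ht⟩
          rwa [abs_sub_comm, abs_of_pos (sub_pos.2 ht1), norm_sub_rev] at h1
        · obtain ⟨r, hr, hrU⟩ := hUnhds c (hNU ⟨hcT, hcG⟩)
          obtain ⟨t, ht, ht1, ht2⟩ := hrd.exists_mem hb hcb
            (x := min b (c + r)) (lt_min hcb (by linarith))
          refine hno t ⟨⟨hcT.1.1.trans ht1.le, (ht2.trans_le (min_le_left _ _)).le⟩, ht⟩ ht1
            (Or.inr fun x hx => hrU ⟨by linarith [hx.1], ?_⟩)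
          exact hx.2.trans_lt (ht2.trans_le (min_le_right _ _))
      · refine hno (tsSigma T c) ⟨⟨hcT.1.1.trans hrs.le, tsSigma_le hb hcb⟩,
          tsSigma_mem hT hcT.2⟩ hrs (Or.inl ?_)
        have h1 := hs c ⟨⟨hcT.1.1, hcb⟩, hcT.2⟩ hrs
        have h2 : 0 < tsSigma T c - c := sub_pos.2 hrs
        nlinarith
    have hbm : b ∈ Icc a b ∩ T := ⟨⟨hab, le_rfl⟩, hb⟩
    have hfam : FamilyBound T U q (M + ε) a b b (b + 1) := by
      obtain ⟨c', hc', hc'b, hfb, hlast⟩ := hcb ▸ hcS.2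
      rcases hlast with rfl | hlast
      · exact hfb.step (lt_add_one _).le (by simp)
      · exact hfb.append hc' hbm hc'b hlast hM' (lt_add_one b)
    obtain ⟨m, u, v, k1, k2, k3, -, k5, k6, k7⟩ := hfam
    have hlen : (∑ k ∈ Finset.range m, (v k - u k)) < δ := by
      have e1 : volume (⋃ k ∈ Finset.range m, Icc (u k) (v k)) =
          ∑ k ∈ Finset.range m, volume (Icc (u k) (v k)) := by
        refine measure_biUnion_finset (fun i hi j hj hij => ?_) fun k _ => measurableSet_Icc
        exact k6 i (by simpa using hi) j (by simpa using hj) hij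
      have e2 : volume (⋃ k ∈ Finset.range m, Icc (u k) (v k)) ≤ volume U := by
        refine measure_mono (iUnion₂_subset fun k hk => k5 k (Finset.mem_range.1 hk))
      simp only [Real.volume_Icc] at e1
      rw [← ENNReal.ofReal_sum_of_nonneg fun k hk =>
        sub_nonneg.2 (k3 k (Finset.mem_range.1 hk))] at e1
      have e3 := (e1 ▸ e2).trans_lt hUδ
      exact (ENNReal.ofReal_lt_ofReal_iff hδ).1 e3
    have h1 := H m u v k1 k2 k3 k6 hlen
    linarith
  refine le_of_forall_pos_le_add fun η hη => ?_
  have hpos : 0 < b - a + 1 := by linarith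
  have := main (η / (b - a + 1)) (div_pos hη hpos)
  have e : η / (b - a + 1) * (b - a + 1) = η := div_mul_cancel₀ _ hpos.ne'
  nlinarith

/-! ### Solutions on a segment -/

/-- A solution of `q^Δ = f(q^σ, t)` on the segment `[a, b]_𝕋`, without an initial condition, in a
form that only involves the values on `[a, b]_𝕋`: the equation is imposed as a difference equation
at right-scattered points, and through the Δ-derivative at almost every right-dense point of the
open interval `(a, b)`. -/
structure SegSol {n : ℕ} (T : Set ℝ) (Ω : Set (EuclideanSpace ℝ (Fin n)))
    (f : EuclideanSpace ℝ (Fin n) → ℝ → EuclideanSpace ℝ (Fin n))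
    (a b : ℝ) (y : ℝ → EuclideanSpace ℝ (Fin n)) : Prop where
  mem : ∀ t ∈ Icc a b ∩ T, y t ∈ Ω
  ac : DeltaAC T a b y
  scat : ∀ t ∈ Ico a b ∩ T, RightScattered T t →
    y (tsSigma T t) - y t = (tsSigma T t - t) • f (y (tsSigma T t)) t
  ae : ∀ᵐ t ∂volume, t ∈ Ioo a b ∩ T → RightDense T t →
    HasDeltaDerivAt T y (f (y (tsSigma T t)) t) t

section SegSol

variable {n : ℕ} {T : Set ℝ} {Ω : Set (EuclideanSpace ℝ (Fin n))}
  {f : EuclideanSpace ℝ (Fin n) → ℝ → EuclideanSpace ℝ (Fin n)}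
  {a b c d : ℝ} {y q : ℝ → EuclideanSpace ℝ (Fin n)}

lemma measurableSet_Ico_inter (hT : IsClosed T) (a b : ℝ) : MeasurableSet (Ico a b ∩ T) :=
  measurableSet_Ico.inter hT.measurableSet

lemma IsSolIccS.segSol (hT : IsClosed T) {t₀ : ℝ} {q₀ : EuclideanSpace ℝ (Fin n)}
    (h : IsSolIccS T Ω f t₀ q₀ q a b) : SegSol T Ω f a b q := by
  obtain ⟨h1, h2, -, h4⟩ := h
  rw [ae_delta_iff (measurableSet_Ico_inter hT a b) inter_subset_right] at h4
  refine ⟨h1, h2, fun t ht hrs => (h4.2 t ht hrs).sub_eq ht.2, ?_⟩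
  filter_upwards [h4.1] with t ht hab _ using ht ⟨⟨hab.1.1.le, hab.1.2⟩, hab.2⟩

/-- Conversely, a segment solution is a solution on `[a, b]_𝕋` as soon as it is continuous at `a`
along the whole time scale; this only matters when `a` is right-scattered and left-dense. -/
lemma SegSol.isSolIccS (hT : IsClosed T) {t₀ : ℝ} {q₀ : EuclideanSpace ℝ (Fin n)}
    (h : SegSol T Ω f a b q) (h₀ : q t₀ = q₀)
    (hc : RightScattered T a → ContinuousWithinAt q T a) : IsSolIccS T Ω f t₀ q₀ q a b := by
  refine ⟨h.mem, h.ac, h₀, ?_⟩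
  rw [ae_delta_iff (measurableSet_Ico_inter hT a b) inter_subset_right]
  have hscat : ∀ t ∈ Ico a b ∩ T, RightScattered T t →
      HasDeltaDerivAt T q (f (q (tsSigma T t)) t) t := by
    intro t ht hrs
    refine hasDeltaDerivAt_of_scattered hrs (h.scat t ht hrs) ?_
    rcases ht.1.1.eq_or_lt with rfl | hlt
    · exact hc hrs
    · have h1 := h.ac.continuousWithinAt (t := t) ⟨⟨ht.1.1, ht.1.2.le⟩, ht.2⟩
      exact h1.mono_of_mem_nhdsWithin
        (inter_mem (mem_nhdsWithin_of_mem_nhds (Icc_mem_nhds hlt ht.1.2)) self_mem_nhdsWithin)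
  refine ⟨?_, hscat⟩
  have hne : ∀ᵐ t ∂(volume : Measure ℝ), t ≠ a := by simp [ae_iff]
  filter_upwards [h.ae, hne] with t ht hta htI
  rcases rightDense_or_scattered T t with hrd | hrs
  · exact ht ⟨⟨lt_of_le_of_ne htI.1.1 (Ne.symm hta), htI.1.2⟩, htI.2⟩ hrd
  · exact hscat t htI hrs

lemma SegSol.mono (h : SegSol T Ω f a b y) (hac : a ≤ c) (hdb : d ≤ b) : SegSol T Ω f c d y := by
  refine ⟨fun t ht => h.mem t ⟨⟨hac.trans ht.1.1, ht.1.2.trans hdb⟩, ht.2⟩, h.ac.mono hac hdb,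
    fun t ht => h.scat t ⟨⟨hac.trans ht.1.1, ht.1.2.trans_le hdb⟩, ht.2⟩, ?_⟩
  filter_upwards [h.ae] with t ht htI
    using ht ⟨⟨hac.trans_lt htI.1.1, htI.1.2.trans_le hdb⟩, htI.2⟩

lemma SegSol.congr (hT : IsClosed T) (hb : b ∈ T) (h : SegSol T Ω f a b q)
    (hqy : EqOn y q (Icc a b ∩ T)) : SegSol T Ω f a b y := by
  have hσ : ∀ t ∈ Ico a b ∩ T, y (tsSigma T t) = q (tsSigma T t) := fun t ht =>
    hqy ⟨⟨ht.1.1.trans (le_tsSigma T t), tsSigma_le hb ht.1.2⟩, tsSigma_mem hT ht.2⟩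
  refine ⟨fun t ht => hqy ht ▸ h.mem t ht, h.ac.congr hqy, fun t ht hrs => ?_, ?_⟩
  · rw [hσ t ht, hqy ⟨⟨ht.1.1, ht.1.2.le⟩, ht.2⟩]
    exact h.scat t ht hrs
  · filter_upwards [h.ae] with t ht htI hrd
    have htI' : t ∈ Ico a b ∩ T := ⟨⟨htI.1.1.le, htI.1.2⟩, htI.2⟩
    rw [hσ t htI']
    exact (ht htI hrd).congr_local (Icc_mem_nhds htI.1.1 htI.1.2) hqy (hσ t htI')

lemma SegSol.glue (hac : a ≤ c) (hcb : c ≤ b) (ha : a ∈ T) (hc : c ∈ T) (hb : b ∈ T)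
    (h1 : SegSol T Ω f a c y) (h2 : SegSol T Ω f c b y) : SegSol T Ω f a b y := by
  refine ⟨fun t ht => ?_, h1.ac.glue hac hcb ha hc hb h2.ac, fun t ht => ?_, ?_⟩
  · rcases le_total t c with h | h
    exacts [h1.mem t ⟨⟨ht.1.1, h⟩, ht.2⟩, h2.mem t ⟨⟨h, ht.1.2⟩, ht.2⟩]
  · rcases lt_or_ge t c with h | h
    exacts [h1.scat t ⟨⟨ht.1.1, h⟩, ht.2⟩, h2.scat t ⟨⟨h, ht.1.2⟩, ht.2⟩]
  · have hne : ∀ᵐ t ∂(volume : Measure ℝ), t ≠ c := by simp [ae_iff]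
    filter_upwards [h1.ae, h2.ae, hne] with t k1 k2 hne ht
    rcases lt_or_gt_of_ne hne with h | h
    exacts [k1 ⟨⟨ht.1.1, h⟩, ht.2⟩, k2 ⟨⟨h, ht.1.2⟩, ht.2⟩]

/-- A solution on a segment where `f` is bounded along it is Lipschitz. -/
lemma SegSol.norm_sub_le (hT : IsClosed T) (ha : a ∈ T) (hb : b ∈ T) (hab : a ≤ b)
    (h : SegSol T Ω f a b q) {K : Set (EuclideanSpace ℝ (Fin n))} {M : ℝ} (hM : 0 ≤ M)
    (hK : ∀ t ∈ Icc a b ∩ T, q t ∈ K)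
    (hf : ∀ᵐ t ∂((deltaMeasure T).restrict (Ico a b ∩ T)), ∀ x ∈ K, ‖f x t‖ ≤ M) :
    ‖q b - q a‖ ≤ M * (b - a) := by
  rw [ae_delta_iff (measurableSet_Ico_inter hT a b) inter_subset_right] at hf
  have hσ : ∀ t ∈ Ico a b ∩ T, q (tsSigma T t) ∈ K := fun t ht =>
    hK _ ⟨⟨ht.1.1.trans (le_tsSigma T t), tsSigma_le hb ht.1.2⟩, tsSigma_mem hT ht.2⟩
  refine h.ac.norm_sub_le hT ha hb hab hM (fun t ht hrs => ?_) ?_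
  · rw [h.scat t ht hrs, norm_smul, Real.norm_eq_abs, abs_of_nonneg (sub_nonneg.2 hrs.le),
      mul_comm]
    exact mul_le_mul_of_nonneg_right (hf.2 t ht hrs _ (hσ t ht)) (sub_nonneg.2 hrs.le)
  · filter_upwards [h.ae, hf.1] with t k1 k2 ht hrd
    have ht' : t ∈ Ico a b ∩ T := ⟨⟨ht.1.1.le, ht.1.2⟩, ht.2⟩
    exact ⟨_, k2 ht' _ (hσ t ht'), k1 ht hrd⟩

/-- The two-point solution across a gap `[t, σ(t)]`. -/
lemma SegSol.of_gap {t : ℝ} {x x' : EuclideanSpace ℝ (Fin n)}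
    (hrs : RightScattered T t) (hx : x ∈ Ω) (hx' : x' ∈ Ω)
    (h : x' - x = tsGrain T t • f x' t) :
    SegSol T Ω f t (tsSigma T t) (fun s => if s ≤ t then x else x') := by
  have hnot : ¬ tsSigma T t ≤ t := not_le.2 hrs
  have hmem : ∀ s ∈ T, t ≤ s → s ≤ tsSigma T t → s = t ∨ s = tsSigma T t := by
    intro s hs h1 h2
    rcases h1.eq_or_lt with rfl | h1
    · exact Or.inl rfl
    · exact Or.inr (h2.antisymm (tsSigma_le hs h1))
  refine ⟨fun s _ => ?_, ?_, fun s hs _ => ?_, Filter.Eventually.of_forall fun s hs => ?_⟩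
  · split_ifs <;> assumption
  · have hpos : 0 < tsSigma T t - t := sub_pos.2 hrs
    refine DeltaAC.of_lipschitz (C := ‖x' - x‖ / (tsSigma T t - t)) fun u hu v hv huv => ?_
    have hnn : 0 ≤ ‖x' - x‖ / (tsSigma T t - t) * (v - u) :=
      mul_nonneg (by positivity) (sub_nonneg.2 huv)
    rcases hmem u hu.2 hu.1.1 hu.1.2 with rfl | rfl
    · rcases hmem v hv.2 hv.1.1 hv.1.2 with rfl | rfl
      · simp
      · rw [if_neg hnot, if_pos le_rfl, div_mul_cancel₀ _ hpos.ne']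
    · have : v = tsSigma T t := hv.1.2.antisymm huv
      subst this
      simp
  · have : s = t := (hmem s hs.2 hs.1.1 hs.1.2.le).resolve_right hs.1.2.ne
    subst this
    rw [if_neg hnot, if_pos le_rfl]
    exact h
  · exact absurd (tsSigma_le hs.2 hs.1.1) (not_le.2 hs.1.2)

/-- A solution on an order-convex part `S ∩ T` of `[c, d]_𝕋` dense in `[c, d]_𝕋`, staying in a
compact subset `K` of `Ω` on which `f` is bounded, extends continuously to a solution on
`[c, d]_𝕋`: it is Lipschitz, hence has limits at the missing endpoints, and these lie in `K`. -/
lemma SegSol.exists_limit (hT : IsClosed T) (hc : c ∈ T) (hd : d ∈ T)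
    {S : Set ℝ} (hSsub : S ∩ T ⊆ Icc c d) (hSd : Icc c d ∩ T ⊆ closure (S ∩ T))
    (hSo : S.OrdConnected) (hcd : c < d)
    (hscat : ∀ t ∈ Ico c d ∩ T, RightScattered T t → t ∈ S ∧ tsSigma T t ∈ S)
    {K : Set (EuclideanSpace ℝ (Fin n))} (hK : IsCompact K) (hKΩ : K ⊆ Ω)
    (hqK : ∀ t ∈ S ∩ T, q t ∈ K) {M : ℝ} (hM : 0 ≤ M)
    (hf : ∀ᵐ t ∂((deltaMeasure T).restrict (Ico c d ∩ T)), ∀ x ∈ K, ‖f x t‖ ≤ M)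
    (hq : ∀ u ∈ S ∩ T, ∀ v ∈ S ∩ T, u < v → SegSol T Ω f u v q) :
    ∃ y, SegSol T Ω f c d y ∧ EqOn y q (S ∩ T) := by
  have hlip : ∀ u ∈ S ∩ T, ∀ v ∈ S ∩ T, u ≤ v → ‖q v - q u‖ ≤ M * (v - u) := by
    intro u hu v hv huv
    rcases huv.eq_or_lt with rfl | huv
    · simp
    · refine (hq u hu v hv huv).norm_sub_le hT hu.2 hv.2 huv.le hM (K := K)
        (fun t ht => hqK t ⟨hSo.out hu.1 hv.1 ht.1, ht.2⟩) ?_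
      refine ae_restrict_of_ae_restrict_of_subset ?_ hf
      exact inter_subset_inter_left _ (Ico_subset_Ico (hSsub hu).1 (hSsub hv).2)
  have hlipOn : LipschitzOnWith (Real.toNNReal M) q (S ∩ T) := by
    refine LipschitzOnWith.of_dist_le_mul fun u hu v hv => ?_
    rw [Real.coe_toNNReal M hM, dist_eq_norm, Real.dist_eq]
    rcases le_total u v with h | h
    · rw [norm_sub_rev, abs_sub_comm, abs_of_nonneg (sub_nonneg.2 h)]
      exact hlip u hu v hv h
    · rw [abs_of_nonneg (sub_nonneg.2 h)]
      exact hlip v hv u hu h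
  obtain ⟨y, hy, hyq⟩ := hlipOn.extend_finite_dimension
  have hyq : EqOn y q (S ∩ T) := hyq.symm
  refine ⟨y, ⟨fun t ht => hKΩ ?_, ?_, fun t ht hrs => ?_, ?_⟩, hyq⟩
  · have h1 : y t ∈ closure (y '' (S ∩ T)) :=
      image_closure_subset_closure_image hy.continuous ⟨t, hSd ht, rfl⟩
    refine hK.isClosed.closure_subset_iff.2 ?_ h1
    rintro _ ⟨s, hs, rfl⟩
    rw [hyq hs]; exact hqK s hs
  · refine DeltaAC.of_lipschitz
      (C := (lipschitzExtensionConstant (EuclideanSpace ℝ (Fin n)) * Real.toNNReal M : NNReal))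
      fun u hu v hv huv => ?_
    have := hy.dist_le_mul v u
    rwa [dist_eq_norm, Real.dist_eq, abs_of_nonneg (sub_nonneg.2 huv)] at this
  · obtain ⟨h1, h2⟩ := hscat t ht hrs
    have h3 := tsSigma_mem hT ht.2
    rw [hyq ⟨h1, ht.2⟩, hyq ⟨h2, h3⟩]
    exact (hq t ⟨h1, ht.2⟩ _ ⟨h2, h3⟩ hrs).scat t ⟨⟨le_rfl, hrs⟩, ht.2⟩ hrs
  · rw [ae_iff]
    refine measure_null_of_locally_null _ fun t ht => ?_
    have ht' : t ∈ Ioo c d ∩ T := by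
      simp only [mem_ofPred_eq, Classical.not_imp] at ht
      exact ht.1
    obtain ⟨u, hu, huS⟩ := mem_closure_iff.1 (hSd ⟨⟨le_rfl, hcd.le⟩, hc⟩) (Iio t) isOpen_Iio
      ht'.1.1
    obtain ⟨v, hv, hvS⟩ := mem_closure_iff.1 (hSd ⟨⟨hcd.le, le_rfl⟩, hd⟩) (Ioi t) isOpen_Ioi
      ht'.1.2
    have huv : u < v := lt_trans hu hv
    have hsol : SegSol T Ω f u v y := (hq u huS v hvS huv).congr hT hvS.2
      fun s hs => hyq ⟨hSo.out huS.1 hvS.1 hs.1, hs.2⟩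
    refine ⟨_, inter_mem self_mem_nhdsWithin
      (mem_nhdsWithin_of_mem_nhds (Ioo_mem_nhds hu hv)), ?_⟩
    refine measure_mono_null ?_ (ae_iff.1 hsol.ae)
    rintro s ⟨hs, hsuv⟩
    simp only [mem_ofPred_eq, Classical.not_imp] at hs ⊢
    exact ⟨⟨hsuv, hs.1.2⟩, hs.2⟩

end SegSol

/-! ### Local existence -/

section LocalExistence

variable {n : ℕ}

/-- Carathéodory superposition: composing a function measurable in `s` and continuous in `x ∈ B`
with a measurable `B`-valued map gives a measurable function. -/
lemma aemeasurable_superposition {ν : Measure ℝ}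
    {F : EuclideanSpace ℝ (Fin n) → ℝ → EuclideanSpace ℝ (Fin n)}
    {B : Set (EuclideanSpace ℝ (Fin n))} (hF : ∀ x ∈ B, AEMeasurable (F x) ν)
    (hcont : ∀ᵐ s ∂ν, ContinuousOn (fun x => F x s) B)
    {Q : ℝ → EuclideanSpace ℝ (Fin n)} (hQ : Measurable Q) (hQB : ∀ s, Q s ∈ B) :
    AEMeasurable (fun s => F (Q s) s) ν := by
  let φ := SimpleFunc.approxOn Q hQ B (Q 0) (hQB 0)
  have hφB : ∀ k s, φ k s ∈ B := fun k s => SimpleFunc.approxOn_mem hQ (hQB 0) k s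
  refine aemeasurable_of_tendsto_metrizable_ae atTop (f := fun k s => F (φ k s) s) (fun k => ?_) ?_
  · have hsum : (fun s => F (φ k s) s) =
        ∑ x ∈ (φ k).range, ((φ k) ⁻¹' {x}).indicator (F x) := by
      funext s
      rw [Finset.sum_apply, Finset.sum_eq_single (φ k s)]
      · rw [indicator_of_mem (show s ∈ (φ k) ⁻¹' {φ k s} from rfl)]
      · intro x _ hx
        exact indicator_of_notMem (show s ∉ (φ k) ⁻¹' {x} from fun h => hx (Eq.symm h)) _
      · intro h
        exact absurd ((φ k).mem_range_self s) h
    rw [hsum]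
    refine Finset.aemeasurable_sum _ fun x hx => ?_
    obtain ⟨s, rfl⟩ := SimpleFunc.mem_range.1 hx
    exact (hF _ (hφB k s)).indicator ((φ k).measurableSet_fiber _)
  · filter_upwards [hcont] with s hs
    have h1 : Tendsto (fun k => φ k s) atTop (nhds (Q s)) :=
      SimpleFunc.tendsto_approxOn hQ (hQB 0) (subset_closure (hQB s))
    exact (hs (Q s) (hQB s)).tendsto.comp
      (tendsto_nhdsWithin_iff.2 ⟨h1, Eventually.of_forall fun k => hφB k s⟩)

/-- Banach's fixed point theorem for `y(t) = x + ∫_e^t F(y(h(s)), s) ds` on `[c, d]`, with `e`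
anywhere in `[c, d]` and an arbitrary measurable deviation `h` of the argument. -/
lemma exists_integral_solution {F : EuclideanSpace ℝ (Fin n) → ℝ → EuclideanSpace ℝ (Fin n)}
    {h : ℝ → ℝ} (hh : Measurable h) {c d e R L M : ℝ} (hcd : c ≤ d) (he : e ∈ Icc c d)
    (hL : 0 ≤ L) (hM : 0 ≤ M) (hLd : L * (d - c) < 1) (hMd : M * (d - c) ≤ R)
    {x : EuclideanSpace ℝ (Fin n)}
    (hF : ∀ z ∈ Metric.closedBall x R, AEMeasurable (F z) volume)
    (hbd : ∀ᵐ s ∂volume, ∀ z ∈ Metric.closedBall x R, ‖F z s‖ ≤ M)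
    (hlip : ∀ᵐ s ∂volume, ∀ z₁ ∈ Metric.closedBall x R, ∀ z₂ ∈ Metric.closedBall x R,
      ‖F z₁ s - F z₂ s‖ ≤ L * ‖z₁ - z₂‖) :
    ∃ y : ℝ → EuclideanSpace ℝ (Fin n), (∀ t, y t ∈ Metric.closedBall x R) ∧
      (∀ u v, IntervalIntegrable (fun s => F (y (h s)) s) volume u v) ∧
      ∀ t ∈ Icc c d, y t = x + ∫ s in e..t, F (y (h s)) s := by
  have hR : 0 ≤ R := (mul_nonneg hM (sub_nonneg.2 hcd)).trans hMd
  have hcont : ∀ᵐ s ∂volume, ContinuousOn (fun z => F z s) (Metric.closedBall x R) := by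
    filter_upwards [hlip] with s hs
    refine LipschitzOnWith.continuousOn (K := Real.toNNReal L)
      (LipschitzOnWith.of_dist_le_mul fun u hu v hv => ?_)
    rw [Real.coe_toNNReal L hL, dist_eq_norm, dist_eq_norm]
    exact hs u hu v hv
  let X := C(Icc c d, Metric.closedBall x R)
  let ext : X → ℝ → EuclideanSpace ℝ (Fin n) := fun y t => y (projIcc c d hcd t)
  have hextB : ∀ (y : X) t, ext y t ∈ Metric.closedBall x R := fun y t => (y _).2
  have hextc : ∀ y : X, Continuous (ext y) := fun y =>
    continuous_subtype_val.comp (y.continuous.comp continuous_projIcc)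
  have hint : ∀ (y : X) u v, IntervalIntegrable (fun s => F (ext y (h s)) s) volume u v := by
    intro y u v
    refine (intervalIntegrable_const (c := M)).mono_fun' ?_ (ae_restrict_of_ae ?_)
    · exact (aemeasurable_superposition hF hcont ((hextc y).measurable.comp hh)
        fun s => hextB y (h s)).aestronglyMeasurable.restrict
    · filter_upwards [hbd] with s hs using hs _ (hextB y _)
  have habs : ∀ t ∈ Icc c d, |t - e| ≤ d - c := fun t ht =>
    abs_le.2 ⟨by linarith [ht.1, he.2], by linarith [ht.2, he.1]⟩
  have hmaps : ∀ (y : X) (t : Icc c d),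
      x + ∫ s in e..(t : ℝ), F (ext y (h s)) s ∈ Metric.closedBall x R := by
    intro y t
    rw [mem_closedBall_iff_norm, add_sub_cancel_left]
    refine (intervalIntegral.norm_integral_le_of_norm_le_const_ae (C := M) ?_).trans
      ((mul_le_mul_of_nonneg_left (habs t t.2) hM).trans hMd)
    filter_upwards [hbd] with s hs _ using hs _ (hextB y _)
  let Φ : X → X := fun y => ⟨fun t => ⟨_, hmaps y t⟩, by
    refine Continuous.subtype_mk (continuous_const.add ?_) _
    exact (intervalIntegral.continuous_primitive (hint y) e).comp continuous_subtype_val⟩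
  have hΦ : ContractingWith (Real.toNNReal (L * (d - c))) Φ := by
    refine ⟨by rwa [Real.toNNReal_lt_one], LipschitzWith.of_dist_le_mul fun y z => ?_⟩
    rw [Real.coe_toNNReal _ (mul_nonneg hL (sub_nonneg.2 hcd))]
    refine (ContinuousMap.dist_le (mul_nonneg (mul_nonneg hL (sub_nonneg.2 hcd))
      dist_nonneg)).2 fun t => ?_
    change dist (x + ∫ s in e..(t : ℝ), F (ext y (h s)) s)
      (x + ∫ s in e..(t : ℝ), F (ext z (h s)) s) ≤ _
    rw [dist_add_left, dist_eq_norm, ← intervalIntegral.integral_sub (hint y _ _) (hint z _ _)]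
    have h1 := intervalIntegral.norm_integral_le_of_norm_le_const_ae (a := e) (b := t)
      (C := L * dist y z) (f := fun s => F (ext y (h s)) s - F (ext z (h s)) s) (by
        filter_upwards [hlip] with s hs _
        refine (hs _ (hextB y _) _ (hextB z _)).trans (mul_le_mul_of_nonneg_left ?_ hL)
        rw [← dist_eq_norm]
        exact ContinuousMap.dist_apply_le_dist (f := y) (g := z) _)
    calc _ ≤ L * dist y z * |(t : ℝ) - e| := h1
      _ ≤ L * dist y z * (d - c) :=
        mul_le_mul_of_nonneg_left (habs t t.2) (mul_nonneg hL dist_nonneg)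
      _ = _ := by ring
  have : Nonempty X := ⟨ContinuousMap.const _ ⟨x, Metric.mem_closedBall_self hR⟩⟩
  have : CompleteSpace (Metric.closedBall x R) := Metric.isClosed_closedBall.completeSpace_coe
  obtain ⟨y, hy⟩ : ∃ y : X, Φ y = y := ⟨_, hΦ.fixedPoint_isFixedPt⟩
  refine ⟨ext y, hextB y, hint y, fun t ht => ?_⟩
  have h2 : ext y t = (Φ y ⟨t, ht⟩ : EuclideanSpace ℝ (Fin n)) := by
    rw [hy]
    simp only [ext, projIcc_of_mem hcd ht]
  exact h2

/-- Local existence on a short segment `[c, d]_𝕋`, with the value prescribed at any `e ∈ [c, d]`;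
forwards in time this is used with `e = c`, backwards with `e = d`. -/
lemma SegSol.exists_local {T : Set ℝ} {Ω : Set (EuclideanSpace ℝ (Fin n))}
    {f : EuclideanSpace ℝ (Fin n) → ℝ → EuclideanSpace ℝ (Fin n)}
    (hT : IsClosed T) (hf : DeltaCaratheodory T Ω f) {c d e R L M : ℝ} (hc : c ∈ T) (hd : d ∈ T)
    (hcd : c < d) (he : e ∈ Icc c d) (hL : 0 ≤ L) (hM : 0 ≤ M) (hLd : L * (d - c) < 1)
    (hMd : M * (d - c) ≤ R) {x : EuclideanSpace ℝ (Fin n)} (hB : Metric.closedBall x R ⊆ Ω)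
    (hbd : ∀ᵐ t ∂((deltaMeasure T).restrict (Ico c d ∩ T)),
      ∀ z ∈ Metric.closedBall x R, ‖f z t‖ ≤ M)
    (hlip : ∀ᵐ t ∂((deltaMeasure T).restrict (Ico c d ∩ T)),
      ∀ z₁ ∈ Metric.closedBall x R, ∀ z₂ ∈ Metric.closedBall x R,
        ‖f z₁ t - f z₂ t‖ ≤ L * ‖z₁ - z₂‖) :
    ∃ y, SegSol T Ω f c d y ∧ y e = x := by
  let g := tsFloor T c
  have hg : Monotone g := tsFloor_monotone hc
  -- On the gaps of `T` the integrand is frozen at its value at the left end of the gap, so that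
  -- Δ-integrals become ordinary integrals.
  let F : EuclideanSpace ℝ (Fin n) → ℝ → EuclideanSpace ℝ (Fin n) :=
    fun z s => (Ico c d).indicator (fun s => f z (g s)) s
  have hFin : ∀ z, ∀ s ∈ Ico c d, F z s = f z (g s) := fun z s hs => indicator_of_mem hs _
  have hFout : ∀ z s, s ∉ Ico c d → F z s = 0 := fun z s hs => indicator_of_notMem hs _
  have hsub : Ico c d ∩ T ⊆ tsUpDomain T := fun t ht =>
    ⟨ht.2, fun hgr => (hgr.2 hd).not_gt ht.1.2⟩
  obtain ⟨y, hyB, hyint, hyeq⟩ := exists_integral_solution (F := F) (h := fun s => tsSigma T (g s))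
    ((tsSigma_monotone T).comp hg).measurable hcd.le he hL hM hLd hMd (x := x) (by
      intro z hz
      have h1 := (hf.1 z (hB hz)).mono_measure (Measure.restrict_mono hsub le_rfl)
      obtain ⟨k, hk, hfk⟩ := h1
      have h2 := ae_tsFloor hT hc hd (P := fun t => f z t = k t) hfk
      refine ⟨(Ico c d).indicator (fun s => k (g s)),
        (hk.comp hg.measurable).indicator measurableSet_Ico, ?_⟩
      filter_upwards [h2] with s hs
      by_cases hI : s ∈ Ico c d
      · rw [hFin z s hI, indicator_of_mem hI]; exact hs hI
      · rw [hFout z s hI, indicator_of_notMem hI])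
    (by
      filter_upwards [ae_tsFloor hT hc hd hbd] with s hs z hz
      by_cases hI : s ∈ Ico c d
      · rw [hFin z s hI]; exact hs hI z hz
      · rw [hFout z s hI, norm_zero]; exact hM)
    (by
      filter_upwards [ae_tsFloor hT hc hd hlip] with s hs z₁ h₁ z₂ h₂
      by_cases hI : s ∈ Ico c d
      · rw [hFin _ s hI, hFin _ s hI]; exact hs hI z₁ h₁ z₂ h₂
      · rw [hFout _ s hI, hFout _ s hI, sub_self, norm_zero]
        exact mul_nonneg hL (norm_nonneg _))
  have hdiff : ∀ u ∈ Icc c d, ∀ v ∈ Icc c d,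
      y v - y u = ∫ s in u..v, F (y (tsSigma T (g s))) s := by
    intro u hu v hv
    rw [hyeq v hv, hyeq u hu, add_sub_add_left_eq_sub]
    exact intervalIntegral.integral_interval_sub_left (hyint _ _) (hyint _ _)
  have hbdF : ∀ᵐ s ∂volume, ‖F (y (tsSigma T (g s))) s‖ ≤ M := by
    filter_upwards [ae_tsFloor hT hc hd hbd] with s hs
    by_cases hI : s ∈ Ico c d
    · rw [hFin _ s hI]; exact hs hI _ (hyB _)
    · rw [hFout _ s hI, norm_zero]; exact hM
  refine ⟨y, ⟨fun t _ => hB (hyB t), ?_, ?_, ?_⟩, ?_⟩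
  · refine DeltaAC.of_lipschitz (C := M) fun u hu v hv huv => ?_
    rw [hdiff u hu.1 v hv.1, ← abs_of_nonneg (sub_nonneg.2 huv)]
    refine intervalIntegral.norm_integral_le_of_norm_le_const_ae ?_
    filter_upwards [hbdF] with s hs _ using hs
  · intro t ht hrs
    have hσd : tsSigma T t ≤ d := tsSigma_le hd ht.1.2
    rw [hdiff t ⟨ht.1.1, ht.1.2.le⟩ _ ⟨ht.1.1.trans hrs.le, hσd⟩]
    have hconst : ∀ᵐ s ∂volume, s ∈ uIoc t (tsSigma T t) →
        F (y (tsSigma T (g s))) s = f (y (tsSigma T t)) t := by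
      have hne : ∀ᵐ s ∂(volume : Measure ℝ), s ≠ tsSigma T t := by simp [ae_iff]
      filter_upwards [hne] with s hs hst
      rw [uIoc_of_le hrs.le] at hst
      have hlt : s < tsSigma T t := lt_of_le_of_ne hst.2 hs
      have hgs : g s = t := tsFloor_gap hT hc ht.2 ht.1.1 hst.1.le hlt
      rw [hFin _ s ⟨ht.1.1.trans hst.1.le, hlt.trans_le hσd⟩, hgs]
    rw [intervalIntegral.integral_congr_ae hconst, intervalIntegral.integral_const]
  · filter_upwards [(hyint c d).ae_hasDerivAt_integral] with t ht hI hrd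
    have hIcc : t ∈ Icc c d := Ioo_subset_Icc_self hI.1
    rw [uIcc_of_le hcd.le] at ht
    have h1 := (ht hIcc e he).const_add x
    have hgt : g t = t := tsFloor_of_mem hT hc hIcc.1 hI.2
    have h2 : HasDerivAt y (F (y (tsSigma T (g t))) t) t := by
      refine h1.congr_of_eventuallyEq ?_
      filter_upwards [Icc_mem_nhds hI.1.1 hI.1.2] with s hs using hyeq s hs
    rw [hFin _ t ⟨hIcc.1, hI.1.2⟩, hgt] at h2
    exact h2.hasDeltaDerivAt hrd
  · rw [hyeq e he, intervalIntegral.integral_same, add_zero]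

end LocalExistence

/-! ### Extending a solution -/

section Extension

variable {n : ℕ} {T : Set ℝ} {Ω : Set (EuclideanSpace ℝ (Fin n))}
  {f : EuclideanSpace ℝ (Fin n) → ℝ → EuclideanSpace ℝ (Fin n)}
  {t₀ a b c d : ℝ} {q₀ : EuclideanSpace ℝ (Fin n)} {y q : ℝ → EuclideanSpace ℝ (Fin n)}
  {I : Set ℝ}

lemma HasDeltaDerivAt.continuousWithinAt {p : EuclideanSpace ℝ (Fin n)} {t : ℝ}
    (h : HasDeltaDerivAt T q p t) (ht : t ∈ T) : ContinuousWithinAt q T t := by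
  have hσ := h.sub_eq ht
  have hμ : 0 ≤ tsSigma T t - t := sub_nonneg.2 (le_tsSigma T t)
  rw [Metric.continuousWithinAt_iff']
  intro η hη
  set m := tsSigma T t - t with hm
  have hε : 0 < η / (2 * (m + 1)) := by positivity
  obtain ⟨U, hU, hUb⟩ := h _ hε
  have hδ : 0 < min 1 (η / (2 * (‖p‖ + 1))) := by positivity
  filter_upwards [inter_mem_nhdsWithin T (inter_mem hU (Metric.ball_mem_nhds t hδ))] with s hs
  have h1 := hUb s ⟨hs.2.1, hs.1⟩
  have h2 : |s - t| < min 1 (η / (2 * (‖p‖ + 1))) := by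
    have := hs.2.2; rwa [Metric.mem_ball, Real.dist_eq] at this
  have h3 : |tsSigma T t - s| ≤ m + 1 := by
    have h5 := abs_lt.1 (h2.trans_le (min_le_left _ _))
    exact abs_le.2 ⟨by linarith [h5.1, h5.2], by linarith [h5.1, h5.2]⟩
  have h4 : ‖(s - t) • p‖ < η / 2 := by
    rw [norm_smul, Real.norm_eq_abs]
    have h5 := h2.trans_le (min_le_right _ _)
    calc |s - t| * ‖p‖ ≤ |s - t| * (‖p‖ + 1) := by gcongr; linarith
      _ < η / (2 * (‖p‖ + 1)) * (‖p‖ + 1) := by gcongr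
      _ = η / 2 := by field_simp
  have h6 : η / (2 * (m + 1)) * |tsSigma T t - s| ≤ η / 2 := by
    calc _ ≤ η / (2 * (m + 1)) * (m + 1) := by gcongr
      _ = η / 2 := by field_simp
  have h7 : q s - q t = (s - t) • p -
      (q (tsSigma T t) - q s - (tsSigma T t - s) • p) := by
    have h8 : q t = q (tsSigma T t) - m • p := by rw [← hσ]; abel
    rw [h8, hm]
    module
  rw [dist_eq_norm, h7]
  calc _ ≤ ‖(s - t) • p‖ + _ := norm_sub_le _ _
    _ < η / 2 + η / 2 := add_lt_add_of_lt_of_le h4 (h1.trans h6)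
    _ = η := by ring

lemma IsSolIccS.mono (h : IsSolIccS T Ω f t₀ q₀ q a b) (hac : a ≤ c) (hdb : d ≤ b) :
    IsSolIccS T Ω f t₀ q₀ q c d :=
  ⟨fun t ht => h.1 t ⟨⟨hac.trans ht.1.1, ht.1.2.trans hdb⟩, ht.2⟩, h.2.1.mono hac hdb, h.2.2.1,
    ae_restrict_of_ae_restrict_of_subset
      (inter_subset_inter_left _ (Ico_subset_Ico hac hdb)) h.2.2.2⟩

lemma Trile.le (h : Trile T t₀ a b) : a ≤ t₀ ∧ t₀ ≤ b := by
  rcases h with ⟨-, rfl, h⟩ | ⟨-, h, rfl⟩ | ⟨-, -, h, h'⟩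
  exacts [⟨le_rfl, h.le⟩, ⟨h.le, le_rfl⟩, ⟨h.le, h'.le⟩]

lemma Trile.right (h : Trile T t₀ a b) (hc : c ∈ T) (h₀ : t₀ < c) : Trile T t₀ a c := by
  rcases h with ⟨h1, rfl, h⟩ | ⟨h1, h, rfl⟩ | ⟨h1, h2, h, h'⟩
  exacts [Or.inl ⟨h1, rfl, h₀⟩, absurd (h1.2 hc) (not_le.2 h₀), Or.inr (Or.inr ⟨h1, h2, h, h₀⟩)]

lemma Trile.left (h : Trile T t₀ a b) (hc : c ∈ T) (h₀ : c < t₀) : Trile T t₀ c b := by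
  rcases h with ⟨h1, rfl, h⟩ | ⟨h1, h, rfl⟩ | ⟨h1, h2, h, h'⟩
  exacts [absurd (h1.2 hc) (not_le.2 h₀), Or.inr (Or.inl ⟨h1, h₀, rfl⟩),
    Or.inr (Or.inr ⟨h1, h2, h₀, h'⟩)]

lemma ordConnected_union {A B : Set ℝ} (hA : A.OrdConnected) (hB : B.OrdConnected)
    (hcA : c ∈ A) (hcB : c ∈ B) : (A ∪ B).OrdConnected :=
  isPreconnected_iff_ordConnected.1
    (IsPreconnected.union c hcA hcB hA.isPreconnected hB.isPreconnected)

/-- A maximal solution cannot be continued to the right by a segment solution. -/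
lemma IsMaxSolS.not_extend_right (hT : IsClosed T) (hq : IsMaxSolS T Ω f t₀ q₀ q I)
    (hc : c ∈ I ∩ T) (hc₀ : t₀ < c) (hd : d ∈ T) (hcd : c < d) (hdI : d ∉ I)
    (hy : SegSol T Ω f c d y) (hyq : ∀ s ∈ I ∩ T, c ≤ s → s ≤ d → y s = q s) : False := by
  obtain ⟨⟨⟨hIo, a₀, ha₀, b₀, hb₀, htri⟩, hIΩ, hsol⟩, hmax⟩ := hq
  have hle : ∀ s ∈ I, s ≤ d := fun s hs => by
    by_contra hlt
    exact hdI (hIo.out hc.1 hs ⟨hcd.le, (not_le.1 hlt).le⟩)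
  let q₁ : ℝ → EuclideanSpace ℝ (Fin n) := fun s => if s ≤ c then q s else y s
  have hq₁le : ∀ s, s ≤ c → q₁ s = q s := fun s hs => if_pos hs
  have hq₁q : EqOn q₁ q (I ∩ T) := by
    intro s hs
    by_cases h : s ≤ c
    · exact hq₁le s h
    · exact (if_neg h).trans (hyq s hs (not_le.1 h).le (hle s hs.1))
  have hq₁y : EqOn q₁ y (Icc c d ∩ T) := by
    intro s hs
    rcases hs.1.1.eq_or_lt with rfl | h
    · rw [hq₁le _ le_rfl, hyq _ hc le_rfl hs.1.2]
    · exact if_neg (not_le.2 h)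
  have hseg : SegSol T Ω f c d q₁ := hy.congr hT hd hq₁y
  have hsol₁ : IsSolS T Ω f t₀ q₀ q₁ (I ∪ Icc c d) := by
    refine ⟨⟨ordConnected_union hIo ordConnected_Icc hc.1 ⟨le_rfl, hcd.le⟩, a₀, ⟨Or.inl ha₀.1, ha₀.2⟩,
      b₀, ⟨Or.inl hb₀.1, hb₀.2⟩, htri⟩, ?_, ?_⟩
    · rintro t ⟨ht | ht, htT⟩
      · rw [hq₁q ⟨ht, htT⟩]; exact hIΩ t ⟨ht, htT⟩
      · exact hseg.mem t ⟨ht, htT⟩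
    · rintro a' ⟨ha', haT⟩ b' ⟨hb', hbT⟩ htri'
      have hac : a' < c := htri'.le.1.trans_lt hc₀
      have haI : a' ∈ I := ha'.resolve_right fun h => not_le.2 hac h.1
      have hbd : b' ≤ d := hb'.elim (hle b') fun h => h.2
      have h1 := hsol a' ⟨haI, haT⟩ c hc (htri'.right hc.2 hc₀)
      have h2 : SegSol T Ω f a' c q₁ := (h1.segSol hT).congr hT hc.2 fun s hs => hq₁le s hs.1.2
      have h3 := h2.glue hac.le hcd.le haT hc.2 hd hseg
      refine (h3.isSolIccS hT ((hq₁le _ hc₀.le).trans h1.2.2.1) fun hrs => ?_).mono le_rfl hbd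
      have h4 := h1.2.2.2
      rw [ae_delta_iff (measurableSet_Ico_inter hT _ _) inter_subset_right] at h4
      refine ((h4.2 a' ⟨⟨le_rfl, hac⟩, haT⟩ hrs).continuousWithinAt haT).congr_of_eventuallyEq ?_
        (hq₁le _ hac.le)
      filter_upwards [mem_nhdsWithin_of_mem_nhds (Iic_mem_nhds hac)] with s hs using hq₁le s hs
  have h5 := hmax q₁ _ hsol₁ ⟨inter_subset_inter_left _ subset_union_left, hq₁q⟩
  have h6 : d ∈ I ∩ T := h5 ▸ ⟨Or.inr ⟨hcd.le, le_rfl⟩, hd⟩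
  exact hdI h6.1

/-- A maximal solution cannot be continued to the left by a segment solution. -/
lemma IsMaxSolS.not_extend_left (hT : IsClosed T) (hq : IsMaxSolS T Ω f t₀ q₀ q I)
    (hc : c ∈ I ∩ T) (hc₀ : c < t₀) (hd : d ∈ T) (hdc : d < c) (hdI : d ∉ I)
    (hy : SegSol T Ω f d c y) (hyq : ∀ s ∈ I ∩ T, d ≤ s → s ≤ c → y s = q s) : False := by
  obtain ⟨⟨⟨hIo, a₀, ha₀, b₀, hb₀, htri⟩, hIΩ, hsol⟩, hmax⟩ := hq
  have hle : ∀ s ∈ I, d ≤ s := fun s hs => by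
    by_contra hlt
    exact hdI (hIo.out hs hc.1 ⟨(not_le.1 hlt).le, hdc.le⟩)
  -- The extension is constant to the left of `d`: if `d` is right-scattered and left-dense, its
  -- Δ-derivative at `d` requires continuity from the left.
  let q₁ : ℝ → EuclideanSpace ℝ (Fin n) := fun s => if c ≤ s then q s else y (max s d)
  have hq₁le : ∀ s, c ≤ s → q₁ s = q s := fun s hs => if_pos hs
  have hq₁d : ∀ s, s ≤ d → q₁ s = y d := fun s hs =>
    (if_neg (not_le.2 (hs.trans_lt hdc))).trans (by rw [max_eq_right hs])
  have hq₁y : EqOn q₁ y (Icc d c ∩ T) := by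
    intro s hs
    rcases hs.1.2.eq_or_lt with rfl | h
    · rw [hq₁le _ le_rfl, hyq _ hc hdc.le le_rfl]
    · exact (if_neg (not_le.2 h)).trans (by rw [max_eq_left hs.1.1])
  have hq₁q : EqOn q₁ q (I ∩ T) := by
    intro s hs
    rcases le_total c s with h | h
    · exact hq₁le s h
    · rw [hq₁y ⟨⟨hle s hs.1, h⟩, hs.2⟩, hyq s hs (hle s hs.1) h]
  have hseg : SegSol T Ω f d c q₁ := hy.congr hT hc.2 hq₁y
  have hsol₁ : IsSolS T Ω f t₀ q₀ q₁ (I ∪ Icc d c) := by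
    refine ⟨⟨ordConnected_union hIo ordConnected_Icc hc.1 ⟨hdc.le, le_rfl⟩, a₀, ⟨Or.inl ha₀.1, ha₀.2⟩,
      b₀, ⟨Or.inl hb₀.1, hb₀.2⟩, htri⟩, ?_, ?_⟩
    · rintro t ⟨ht | ht, htT⟩
      · rw [hq₁q ⟨ht, htT⟩]; exact hIΩ t ⟨ht, htT⟩
      · exact hseg.mem t ⟨ht, htT⟩
    · rintro a' ⟨ha', haT⟩ b' ⟨hb', hbT⟩ htri'
      have hcb : c < b' := hc₀.trans_le htri'.le.2
      have hbI : b' ∈ I := hb'.resolve_right fun h => not_le.2 hcb h.2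
      have had : d ≤ a' := ha'.elim (hle a') fun h => h.1
      have h1 := hsol c hc b' ⟨hbI, hbT⟩ (htri'.left hc.2 hc₀)
      have h2 : SegSol T Ω f c b' q₁ := (h1.segSol hT).congr hT hbT fun s hs => hq₁le s hs.1.1
      have h3 := hseg.glue hdc.le hcb.le hd hc.2 hbT h2
      refine (h3.isSolIccS hT ((hq₁le _ hc₀.le).trans h1.2.2.1) fun hrs => ?_).mono had le_rfl
      refine (continuousWithinAt_const (b := y d)).congr_of_eventuallyEq ?_ (hq₁d d le_rfl)
      filter_upwards [mem_nhdsWithin_of_mem_nhds (Iio_mem_nhds hrs), self_mem_nhdsWithin]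
        with s hs hsT
      refine hq₁d s ?_
      by_contra hlt
      exact not_le.2 hs (tsSigma_le hsT (not_le.1 hlt))
  have h5 := hmax q₁ _ hsol₁ ⟨inter_subset_inter_left _ subset_union_left, hq₁q⟩
  have h6 : d ∈ I ∩ T := h5 ▸ ⟨Or.inr ⟨le_rfl, hdc.le⟩, hd⟩
  exact hdI h6.1

end Extension

/-! ### The ends of the maximal interval -/

section Ends

variable {n : ℕ} {T : Set ℝ} {Ω : Set (EuclideanSpace ℝ (Fin n))}
  {f : EuclideanSpace ℝ (Fin n) → ℝ → EuclideanSpace ℝ (Fin n)}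
  {t₀ : ℝ} {q₀ : EuclideanSpace ℝ (Fin n)} {q : ℝ → EuclideanSpace ℝ (Fin n)} {I : Set ℝ}

lemma exists_small_step {L M R δ : ℝ} (hL : 0 ≤ L) (hM : 0 ≤ M) (hR : 0 < R) (hδ : 0 < δ) :
    ∃ κ > 0, ∀ s, 0 < s → s < κ → s < δ ∧ L * s < 1 ∧ M * s ≤ R := by
  refine ⟨min δ (min (1 / (L + 1)) (R / (M + 1))), by positivity, fun s hs hsκ => ?_⟩
  obtain ⟨h1, h23⟩ := lt_min_iff.1 hsκ
  obtain ⟨h2, h3⟩ := lt_min_iff.1 h23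
  rw [lt_div_iff₀ (by positivity)] at h2 h3
  exact ⟨h1, by nlinarith, by nlinarith⟩

/-- Forward in time, a maximal solution either exists up to the end of `T`, or it stops before a
left-dense point `b` and then leaves every compact subset of `Ω`. -/
lemma IsMaxSolS.right_end (hT : IsClosed T) (hgr : ¬ IsGreatest T t₀)
    (hf : DeltaCaratheodory T Ω f) (hinf : HInfty T Ω f) (hrd : HrdLocLip T Ω f)
    (hreg : HforwRegr T Ω f) (hq : IsMaxSolS T Ω f t₀ q₀ q I) :
    (∀ t ∈ T, t₀ ≤ t → t ∈ I) ∨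
      ∃ b ∈ T, t₀ < b ∧ LeftDense T b ∧ (∀ t ∈ T, t₀ ≤ t → (t ∈ I ↔ t < b)) ∧
        ∀ K ⊆ Ω, IsCompact K → ∃ t ∈ I ∩ T, q t ∈ Ω \ K := by
  obtain ⟨⟨hIo, a₀, ha₀, b₀, hb₀, htri⟩, hIΩ, hsol⟩ := hq.1
  have htb : t₀ < b₀ := by
    rcases htri with h | h | h
    exacts [h.2.2, absurd h.1 hgr, h.2.2.2]
  have hseg : ∀ v ∈ I ∩ T, t₀ < v → SegSol T Ω f a₀ v q := fun v hv hv₀ =>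
    (hsol a₀ ha₀ v hv (htri.right hv.2 hv₀)).segSol hT
  refine or_iff_not_imp_left.2 fun hall => ?_
  push Not at hall
  obtain ⟨τ, hτT, hτ₀, hτI⟩ := hall
  have hup : ∀ s ∈ I ∩ T, s ≤ τ := fun s hs => by
    by_contra hlt
    exact hτI (hIo.out ha₀.1 hs.1 ⟨htri.le.1.trans hτ₀, (not_le.1 hlt).le⟩)
  have hbdd : BddAbove (I ∩ T) := ⟨τ, hup⟩
  obtain ⟨b, hb⟩ : ∃ b, IsLUB (I ∩ T) b := ⟨_, isLUB_csSup ⟨b₀, hb₀⟩ hbdd⟩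
  have hbT : b ∈ T := closure_minimal inter_subset_right hT (hb.mem_closure ⟨b₀, hb₀⟩)
  have hb₀b : b₀ ≤ b := hb.1 hb₀
  have h₀b : t₀ < b := htb.trans_le hb₀b
  have hbτ : b ≤ τ := hb.2 hup
  have hbI : b ∉ I := by
    intro hbI
    have hbτ' : b < τ := lt_of_le_of_ne hbτ fun h => hτI (h ▸ hbI)
    have hout : ∀ d ∈ T, b < d → d ∉ I := fun d hd hbd hdI => not_le.2 hbd (hb.1 ⟨hdI, hd⟩)
    have hqb : q b ∈ Ω := hIΩ b ⟨hbI, hbT⟩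
    rcases rightDense_or_scattered T b with hd | hs
    · obtain ⟨R, hR, δ, hδ, L, hL, hB, hδT, hlip⟩ :=
        hrd (q b) hqb b hbT (fun h => not_le.2 hbτ' (h.2 hτT)) hd
      obtain ⟨M, hM, hbd⟩ := hinf _ hB (isCompact_closedBall _ _) b hbT (b + δ) hδT (by linarith)
      obtain ⟨κ, hκ, hstep⟩ := exists_small_step hL hM hR hδ
      obtain ⟨d, hdT, hbd', hdκ⟩ := hd.exists_mem hτT hbτ' (x := b + κ) (by linarith)
      obtain ⟨h1, h2, h3⟩ := hstep (d - b) (by linarith) (by linarith)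
      have hsub : Ico b d ∩ T ⊆ Ico b (b + δ) ∩ T :=
        inter_subset_inter_left _ (Ico_subset_Ico le_rfl (by linarith))
      obtain ⟨y, hy, hyb⟩ := SegSol.exists_local hT hf hbT hdT hbd' (e := b) ⟨le_rfl, hbd'.le⟩ hL hM
        h2 h3 hB (ae_restrict_of_ae_restrict_of_subset hsub hbd)
        (ae_restrict_of_ae_restrict_of_subset hsub hlip)
      refine hq.not_extend_right hT ⟨hbI, hbT⟩ h₀b hdT hbd' (hout d hdT hbd') hy fun s hs hbs _ => ?_
      obtain rfl : s = b := le_antisymm (hb.1 hs) hbs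
      exact hyb
    · obtain ⟨x', hx', hxq⟩ := (hreg b hbT hs).surjOn (mem_univ (q b))
      have hgap : x' - q b = tsGrain T b • f x' b := by
        rw [← hxq]; simp
      have hσT := tsSigma_mem hT hbT
      refine hq.not_extend_right hT ⟨hbI, hbT⟩ h₀b hσT hs (hout _ hσT hs)
        (SegSol.of_gap hs hqb hx' hgap) fun s hs hbs _ => ?_
      obtain rfl : s = b := le_antisymm (hb.1 hs) hbs
      exact if_pos le_rfl
  have hlt : ∀ t ∈ I ∩ T, t < b := fun t ht => lt_of_le_of_ne (hb.1 ht) fun h => hbI (h ▸ ht.1)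
  have hld : LeftDense T b := by
    refine (leftDense_or_lt T b).resolve_right fun h => ?_
    obtain ⟨s, hs, h1, -⟩ := hb.exists_between h
    exact not_le.2 h1 (le_tsRho hs.2 (hlt s hs))
  have hmemI : ∀ t ∈ T, t₀ ≤ t → t < b → t ∈ I := fun t _ ht₀ htb' => by
    obtain ⟨s, hs, h1, -⟩ := hb.exists_between htb'
    exact hIo.out ha₀.1 hs.1 ⟨htri.le.1.trans ht₀, h1.le⟩
  refine ⟨b, hbT, h₀b, hld, fun t ht ht₀ => ⟨fun h => hlt t ⟨h, ht⟩, hmemI t ht ht₀⟩,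
    fun K hKΩ hK => ?_⟩
  by_contra hcon
  have hqK : ∀ t ∈ I ∩ T, q t ∈ K := fun t ht => by
    by_contra hne
    exact hcon ⟨t, ht, hIΩ t ht, hne⟩
  have hb₀lt := hlt b₀ hb₀
  obtain ⟨M, hM, hbd⟩ := hinf K hKΩ hK b₀ hb₀.2 b hbT hb₀lt
  have hSI : ∀ t ∈ Ico b₀ b ∩ T, t ∈ I ∩ T := fun t ht =>
    ⟨hmemI t ht.2 (htb.le.trans ht.1.1) ht.1.2, ht.2⟩
  obtain ⟨y, hy, hyq⟩ := SegSol.exists_limit (q := q) hT hb₀.2 hbT (S := Ico b₀ b)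
    (fun t ht => Ico_subset_Icc_self ht.1) (fun t ht => by
      rcases ht.1.2.eq_or_lt with rfl | h
      · refine Metric.mem_closure_iff.2 fun ε hε => ?_
        obtain ⟨s, hs, h1, h2⟩ := hld.exists_mem hb₀.2 hb₀lt (x := max b₀ (t - ε))
          (max_lt hb₀lt (by linarith))
        obtain ⟨h3, h4⟩ := max_lt_iff.1 h1
        refine ⟨s, ⟨⟨h3.le, h2⟩, hs⟩, ?_⟩
        rw [Real.dist_eq, abs_of_pos (by linarith)]
        linarith
      · exact subset_closure ⟨⟨ht.1.1, h⟩, ht.2⟩)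
    ordConnected_Ico hb₀lt (fun t ht hrs => by
      refine ⟨ht.1, ht.1.1.trans (le_tsSigma T t), lt_of_le_of_ne (tsSigma_le hbT ht.1.2) ?_⟩
      intro he
      obtain ⟨s, hs, h1, h2⟩ := hld.exists_mem hb₀.2 hb₀lt ht.1.2
      exact not_le.2 h2 (he ▸ tsSigma_le hs h1))
    hK hKΩ (fun t ht => hqK t (hSI t ht)) hM hbd (fun u hu v hv huv =>
      (hseg v (hSI v hv) (htb.trans_le hv.1.1)).mono
        (htri.le.1.trans (htb.le.trans hu.1.1)) le_rfl)
  exact hq.not_extend_right hT hb₀ htb hbT hb₀lt hbI hy fun s hs h1 _ =>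
    hyq ⟨⟨h1, hlt s hs⟩, hs.2⟩

/-- Backward in time, a maximal solution either exists up to the end of `T`, or it stops after a
right-dense point `a` and then leaves every compact subset of `Ω`. -/
lemma IsMaxSolS.left_end (hT : IsClosed T) (hlst : ¬ IsLeast T t₀)
    (hf : DeltaCaratheodory T Ω f) (hinf : HInfty T Ω f) (hld : HldLocLip T Ω f)
    (hstab : HbackStab T Ω f) (hq : IsMaxSolS T Ω f t₀ q₀ q I) :
    (∀ t ∈ T, t ≤ t₀ → t ∈ I) ∨
      ∃ a ∈ T, a < t₀ ∧ RightDense T a ∧ (∀ t ∈ T, t ≤ t₀ → (t ∈ I ↔ a < t)) ∧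
        ∀ K ⊆ Ω, IsCompact K → ∃ t ∈ I ∩ T, q t ∈ Ω \ K := by
  obtain ⟨⟨hIo, a₀, ha₀, b₀, hb₀, htri⟩, hIΩ, hsol⟩ := hq.1
  have hta : a₀ < t₀ := by
    rcases htri with h | h | h
    exacts [absurd h.1 hlst, h.2.1, h.2.2.1]
  have hseg : ∀ v ∈ I ∩ T, v < t₀ → SegSol T Ω f v b₀ q := fun v hv hv₀ =>
    (hsol v hv b₀ hb₀ (htri.left hv.2 hv₀)).segSol hT
  refine or_iff_not_imp_left.2 fun hall => ?_
  push Not at hall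
  obtain ⟨τ, hτT, hτ₀, hτI⟩ := hall
  have hlow : ∀ s ∈ I ∩ T, τ ≤ s := fun s hs => by
    by_contra hlt
    exact hτI (hIo.out hs.1 hb₀.1 ⟨(not_le.1 hlt).le, hτ₀.trans htri.le.2⟩)
  have hbdd : BddBelow (I ∩ T) := ⟨τ, hlow⟩
  obtain ⟨a, ha⟩ : ∃ a, IsGLB (I ∩ T) a := ⟨_, isGLB_csInf ⟨a₀, ha₀⟩ hbdd⟩
  have haT : a ∈ T := closure_minimal inter_subset_right hT (ha.mem_closure ⟨a₀, ha₀⟩)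
  have haa₀ : a ≤ a₀ := ha.1 ha₀
  have ha₀t : a < t₀ := haa₀.trans_lt hta
  have hτa : τ ≤ a := ha.2 hlow
  have haI : a ∉ I := by
    intro haI
    have hτa' : τ < a := lt_of_le_of_ne hτa fun h => hτI (h ▸ haI)
    have hout : ∀ d ∈ T, d < a → d ∉ I := fun d hd hda hdI => not_le.2 hda (ha.1 ⟨hdI, hd⟩)
    have hqa : q a ∈ Ω := hIΩ a ⟨haI, haT⟩
    rcases leftDense_or_lt T a with hd | hs
    · obtain ⟨R, hR, δ, hδ, L, hL, hB, hδT, hlip⟩ :=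
        hld (q a) hqa a haT (fun h => not_le.2 hτa' (h.2 hτT)) hd
      obtain ⟨M, hM, hbd⟩ := hinf _ hB (isCompact_closedBall _ _) (a - δ) hδT a haT (by linarith)
      obtain ⟨κ, hκ, hstep⟩ := exists_small_step hL hM hR hδ
      obtain ⟨d, hdT, hdκ, hda⟩ := hd.exists_mem hτT hτa' (x := a - κ) (by linarith)
      obtain ⟨h1, h2, h3⟩ := hstep (a - d) (by linarith) (by linarith)
      have hsub : Ico d a ∩ T ⊆ Ico (a - δ) a ∩ T :=
        inter_subset_inter_left _ (Ico_subset_Ico (by linarith) le_rfl)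
      obtain ⟨y, hy, hya⟩ := SegSol.exists_local hT hf hdT haT hda (e := a) ⟨hda.le, le_rfl⟩ hL hM
        h2 h3 hB (ae_restrict_of_ae_restrict_of_subset hsub hbd)
        (ae_restrict_of_ae_restrict_of_subset hsub hlip)
      refine hq.not_extend_left hT ⟨haI, haT⟩ ha₀t hdT hda (hout d hdT hda) hy fun s hs _ hsa => ?_
      obtain rfl : s = a := le_antisymm hsa (ha.1 hs)
      exact hya
    · -- The step backwards from `a` to `d = ρ(a)` is explicit.
      set d := tsRho T a with hd
      have hdT : d ∈ T := tsRho_mem hT haT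
      have hσ : tsSigma T d = a := by
        refine le_antisymm (tsSigma_le haT hs) (not_lt.1 fun h => ?_)
        have h1 : tsSigma T d ≤ d := le_tsRho (tsSigma_mem hT hdT) h
        have h2 : RightDense T d := le_antisymm h1 (le_tsSigma T d)
        obtain ⟨s, hsT, h3, h4⟩ := h2.exists_mem haT hs hs
        exact not_le.2 h3 (le_tsRho hsT h4)
      have hrs : RightScattered T d := by rw [RightScattered, hσ]; exact hs
      have hx := hstab d hdT hrs (q a) hqa
      have hgap := SegSol.of_gap (f := f) hrs hx hqa (by abel)
      rw [hσ] at hgap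
      refine hq.not_extend_left hT ⟨haI, haT⟩ ha₀t hdT hs (hout d hdT hs) hgap fun s hs' _ hsa => ?_
      obtain rfl : s = a := le_antisymm hsa (ha.1 hs')
      exact if_neg (not_le.2 hs)
  have hlt : ∀ t ∈ I ∩ T, a < t := fun t ht => lt_of_le_of_ne (ha.1 ht) fun h => haI (h ▸ ht.1)
  have hrd : RightDense T a := by
    refine (rightDense_or_scattered T a).resolve_right fun h => ?_
    obtain ⟨s, hs, -, h1⟩ := ha.exists_between h
    exact not_le.2 h1 (tsSigma_le hs.2 (hlt s hs))
  have hmemI : ∀ t ∈ T, t ≤ t₀ → a < t → t ∈ I := fun t _ ht₀ hat => by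
    obtain ⟨s, hs, -, h1⟩ := ha.exists_between hat
    exact hIo.out hs.1 hb₀.1 ⟨h1.le, ht₀.trans htri.le.2⟩
  refine ⟨a, haT, ha₀t, hrd, fun t ht ht₀ => ⟨fun h => hlt t ⟨h, ht⟩, hmemI t ht ht₀⟩,
    fun K hKΩ hK => ?_⟩
  by_contra hcon
  have hqK : ∀ t ∈ I ∩ T, q t ∈ K := fun t ht => by
    by_contra hne
    exact hcon ⟨t, ht, hIΩ t ht, hne⟩
  have ha₀lt := hlt a₀ ha₀
  obtain ⟨M, hM, hbd⟩ := hinf K hKΩ hK a haT a₀ ha₀.2 ha₀lt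
  have hSI : ∀ t ∈ Ioc a a₀ ∩ T, t ∈ I ∩ T := fun t ht =>
    ⟨hmemI t ht.2 (ht.1.2.trans hta.le) ht.1.1, ht.2⟩
  obtain ⟨y, hy, hyq⟩ := SegSol.exists_limit (q := q) hT haT ha₀.2 (S := Ioc a a₀)
    (fun t ht => Ioc_subset_Icc_self ht.1) (fun t ht => by
      rcases ht.1.1.eq_or_lt with rfl | h
      · refine Metric.mem_closure_iff.2 fun ε hε => ?_
        obtain ⟨s, hs, h2, h1⟩ := hrd.exists_mem ha₀.2 ha₀lt (x := min a₀ (a + ε))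
          (lt_min ha₀lt (by linarith))
        obtain ⟨h3, h4⟩ := lt_min_iff.1 h1
        refine ⟨s, ⟨⟨h2, h3.le⟩, hs⟩, ?_⟩
        rw [Real.dist_eq, abs_of_neg (by linarith)]
        linarith
      · exact subset_closure ⟨⟨h, ht.1.2⟩, ht.2⟩)
    ordConnected_Ioc ha₀lt (fun t ht hrs => by
      have hat : a < t := lt_of_le_of_ne ht.1.1 fun h => hrd.not_scattered (h ▸ hrs)
      exact ⟨⟨hat, ht.1.2.le⟩, hat.trans hrs, tsSigma_le ha₀.2 ht.1.2⟩)
    hK hKΩ (fun t ht => hqK t (hSI t ht)) hM hbd (fun u hu v hv huv =>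
      (hseg u (hSI u hu) (hu.1.2.trans_lt hta)).mono le_rfl
        (hv.1.2.trans (hta.le.trans htri.le.2)))
  exact hq.not_extend_left hT ha₀ hta haT ha₀lt haI hy fun s hs _ h1 =>
    hyq ⟨⟨hlt s hs, h1⟩, hs.2⟩

end Ends

/-! ### The dichotomy -/

theorem stmt6 {n : ℕ}
    (T : Set ℝ) (hTclosed : IsClosed T) (hTnontriv : T.Nontrivial)
    (Ω : Set (EuclideanSpace ℝ (Fin n))) (hΩopen : IsOpen Ω) (hΩne : Ω.Nonempty)
    (f : EuclideanSpace ℝ (Fin n) → ℝ → EuclideanSpace ℝ (Fin n)) (hf : DeltaCaratheodory T Ω f)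
    (t₀ : ℝ) (ht₀ : t₀ ∈ T) (q₀ : EuclideanSpace ℝ (Fin n)) (hq₀ : q₀ ∈ Ω)
    (h1 : IsLeast T t₀ → HInfty T Ω f ∧ HrdLocLip T Ω f ∧ HforwRegr T Ω f)
    (h2 : IsGreatest T t₀ → HInfty T Ω f ∧ HldLocLip T Ω f ∧ HbackStab T Ω f)
    (h3 : ¬ IsLeast T t₀ → ¬ IsGreatest T t₀ →
      HInfty T Ω f ∧ HrdLocLip T Ω f ∧ HforwRegr T Ω f ∧ HldLocLip T Ω f ∧ HbackStab T Ω f)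
    (q : ℝ → EuclideanSpace ℝ (Fin n)) (I : Set ℝ) (hq : IsMaxSolS T Ω f t₀ q₀ q I) :
    I ∩ T = T ∨
      (I ∩ T ≠ T ∧
        (IsLeast T t₀ → ∃ b ∈ T, t₀ < b ∧ LeftDense T b ∧ I ∩ T = Ico t₀ b ∩ T) ∧
        (IsGreatest T t₀ → ∃ a ∈ T, a < t₀ ∧ RightDense T a ∧ I ∩ T = Ioc a t₀ ∩ T) ∧
        (¬ IsLeast T t₀ → ¬ IsGreatest T t₀ →
          (∃ a ∈ T, a < t₀ ∧ RightDense T a ∧ I ∩ T = Ioi a ∩ T) ∨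
          (∃ b ∈ T, t₀ < b ∧ LeftDense T b ∧ I ∩ T = Iio b ∩ T) ∨
          (∃ a ∈ T, a < t₀ ∧ ∃ b ∈ T, t₀ < b ∧ RightDense T a ∧ LeftDense T b ∧
            I ∩ T = Ioo a b ∩ T)) ∧
        (∀ K ⊆ Ω, IsCompact K → ∃ t ∈ I ∩ T, q t ∈ Ω \ K)) := by
  have htri : ∃ a₀ ∈ I ∩ T, ∃ b₀ ∈ I ∩ T, Trile T t₀ a₀ b₀ := hq.1.1.2
  obtain ⟨a₀, ha₀, b₀, hb₀, htri⟩ := htri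
  have ht₀I : t₀ ∈ I := hq.1.1.1.out ha₀.1 hb₀.1 htri.le
  -- `t₀` cannot be both the least and the greatest element of the nontrivial set `T`.
  have hne : IsLeast T t₀ → ¬ IsGreatest T t₀ := fun hl hg =>
    hTnontriv.not_subset_singleton (x := t₀) fun s hs => le_antisymm (hg.2 hs) (hl.2 hs)
  refine or_iff_not_imp_left.2 fun hnot => ?_
  have hR : ¬ IsGreatest T t₀ → _ := fun hg =>
    have hyp : HInfty T Ω f ∧ HrdLocLip T Ω f ∧ HforwRegr T Ω f := by
      by_cases hl : IsLeast T t₀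
      · exact h1 hl
      · exact ⟨(h3 hl hg).1, (h3 hl hg).2.1, (h3 hl hg).2.2.1⟩
    hq.right_end hTclosed hg hf hyp.1 hyp.2.1 hyp.2.2
  have hL : ¬ IsLeast T t₀ → _ := fun hl =>
    have hyp : HInfty T Ω f ∧ HldLocLip T Ω f ∧ HbackStab T Ω f := by
      by_cases hg : IsGreatest T t₀
      · exact h2 hg
      · exact ⟨(h3 hl hg).1, (h3 hl hg).2.2.2⟩
    hq.left_end hTclosed hl hf hyp.1 hyp.2.1 hyp.2.2
  by_cases hl : IsLeast T t₀
  · have hg := hne hl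
    rcases hR hg with hall | ⟨b, hbT, hb, hld, hiff, hK⟩
    · exact absurd (inter_eq_right.2 fun t ht => hall t ht (hl.2 ht)) hnot
    · refine ⟨hnot, fun _ => ⟨b, hbT, hb, hld, ?_⟩, fun h => absurd h hg, fun h => absurd hl h, hK⟩
      ext t
      exact ⟨fun ht => ⟨⟨hl.2 ht.2, (hiff t ht.2 (hl.2 ht.2)).1 ht.1⟩, ht.2⟩,
        fun ht => ⟨(hiff t ht.2 ht.1.1).2 ht.1.2, ht.2⟩⟩
  by_cases hg : IsGreatest T t₀
  · rcases hL hl with hall | ⟨a, haT, ha, hrd, hiff, hK⟩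
    · exact absurd (inter_eq_right.2 fun t ht => hall t ht (hg.2 ht)) hnot
    · refine ⟨hnot, fun h => absurd h hl, fun _ => ⟨a, haT, ha, hrd, ?_⟩, fun _ h => absurd hg h, hK⟩
      ext t
      exact ⟨fun ht => ⟨⟨(hiff t ht.2 (hg.2 ht.2)).1 ht.1, hg.2 ht.2⟩, ht.2⟩,
        fun ht => ⟨(hiff t ht.2 ht.1.2).2 ht.1.1, ht.2⟩⟩
  rcases hR hg with hallR | ⟨b, hbT, hb, hld, hiffR, hKR⟩ <;>
    rcases hL hl with hallL | ⟨a, haT, ha, hrd, hiffL, hKL⟩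
  · exact absurd (inter_eq_right.2 fun t ht => (le_total t₀ t).elim (hallR t ht) (hallL t ht)) hnot
  · refine ⟨hnot, fun h => absurd h hl, fun h => absurd h hg,
      fun _ _ => Or.inl ⟨a, haT, ha, hrd, ?_⟩, hKL⟩
    ext t
    refine and_congr_left fun ht => ?_
    rcases le_total t₀ t with h | h
    · exact iff_of_true (hallR t ht h) (ha.trans_le h)
    · exact hiffL t ht h
  · refine ⟨hnot, fun h => absurd h hl, fun h => absurd h hg,
      fun _ _ => Or.inr (Or.inl ⟨b, hbT, hb, hld, ?_⟩), hKR⟩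
    ext t
    refine and_congr_left fun ht => ?_
    rcases le_total t₀ t with h | h
    · exact hiffR t ht h
    · exact iff_of_true (hallL t ht h) (h.trans_lt hb)
  · refine ⟨hnot, fun h => absurd h hl, fun h => absurd h hg,
      fun _ _ => Or.inr (Or.inr ⟨a, haT, ha, b, hbT, hb, hrd, hld, ?_⟩), hKR⟩
    ext t
    refine and_congr_left fun ht => ?_
    rcases le_total t₀ t with h | h
    · exact (hiffR t ht h).trans ⟨fun k => ⟨ha.trans_le h, k⟩, fun k => k.2⟩
    · exact (hiffL t ht h).trans ⟨fun k => ⟨k, h.trans_lt hb⟩, fun k => k.1⟩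

end
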